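/- arXiv:1901.02737 — 2 statements merged into one kernel-verified Lean document; each statement's English description precedes it below -/
import Mathlib

section
/- Let T : 𝒮^∞ → 𝒮^∞ be a surjective (not necessarily linear) isometry with respect to the norm ‖·‖_Σ. Then there exist constants c, λ ∈ ℂ with |c| = 1 and |λ| = 1 such that either T(f)(z) = T(0)(z) + c·f(λz) for all f ∈ 𝒮^∞ and all z ∈ 𝔻, or T(f)(z) = T(0)(z) + conj(c·f(conj(λz))) for all f ∈ 𝒮^∞ and all z ∈ 𝔻. -/
open Complex Metric Set

/-- `f` belongs to `𝒮^∞`: `f` is analytic on the open unit disc `𝔻` and its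
derivative is bounded on `𝔻`. -/
def MemSInf (f : ℂ → ℂ) : Prop :=
  DifferentiableOn ℂ f (ball (0 : ℂ) 1) ∧
    ∃ M : ℝ, ∀ z ∈ ball (0 : ℂ) 1, ‖deriv f z‖ ≤ M

/-- The norm `‖f‖_Σ = sup_{z ∈ 𝔻} |f(z)| + sup_{w ∈ 𝔻} |f'(w)|`. -/
noncomputable def normSigma (f : ℂ → ℂ) : ℝ :=
  (⨆ z : ball (0 : ℂ) 1, ‖f (z : ℂ)‖) + ⨆ w : ball (0 : ℂ) 1, ‖deriv f (w : ℂ)‖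

/-
By the Mazur–Ulam theorem it suffices to study surjective real linear isometries `U` of `𝒮^∞`.

* The constants embed isometrically in such a way that the norm is additive on every function and a
  suitable unimodular constant. Testing against peak functions at the points of the circle, both at
  first order and after a small perturbation, shows that an isometric copy of `ℂ` with this property
  consists of the constants only. So `U` maps constants to constants and, after composition with a
  rotation and possibly a conjugation, fixes them.
* If `U` fixes the constants, adding large constants in the direction `u` to `f` shows that `U`
  preserves `sup re (conj u * f) + sup |f'|` for every unimodular `u`. Hence the closed convex hull
  of the range of `U z` is a disc about `0`. Its radius turns out to be `1`, and then `U z = λ z`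
  and `U z² = λ² z²`. After another rotation `U` also fixes `z` and `z²`, and the same argument
  applied to `conj c * U (c * f)` shows that it fixes all quadratic polynomials.
* Comparing the norms of `r z + g` and `r z + U g` as `r → ∞` shows that
  `re (conj x * (U g - g) x)` is constant on the circle. This forces `U g - g` to be a quadratic
  polynomial, which `U` fixes. Then `U^n g = g + n (U g - g)` is bounded, so `U g = g`.
-/

open Filter Topology ComplexConjugate

section NormedSpace

variable {E : Type*} [NormedAddCommGroup E] [NormedSpace ℝ E]

theorem smul_eq_smul_of_add_le_norm_add [StrictConvexSpace ℝ E] {x y : E} {a b : ℝ}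
    (hx : ‖x‖ ≤ a) (hy : ‖y‖ ≤ b) (h : a + b ≤ ‖x + y‖) : a • y = b • x := by
  have hadd := norm_add_le x y
  obtain rfl : ‖x‖ = a := by linarith
  obtain rfl : ‖y‖ = b := by linarith
  exact (sameRay_iff_norm_add.2 (hadd.antisymm h)).norm_smul_eq

end NormedSpace

theorem exists_circle_norm_smul_eq (w : ℂ) : ∃ u : Circle, w = ‖w‖ * u :=
  ⟨Circle.exp w.arg, by rw [Circle.coe_exp, norm_mul_exp_arg_mul_I]⟩

theorem conj_mul_circle (x : Circle) : conj (x : ℂ) * x = 1 := by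
  rw [← normSq_eq_conj_mul_self, x.normSq_coe, ofReal_one]

theorem exists_circle_coe_eq_I : ∃ ι : Circle, (ι : ℂ) = I := by
  simpa [eq_comm] using exists_circle_norm_smul_eq I

theorem circle_coe_mem_closedBall (x : Circle) : (x : ℂ) ∈ closedBall (0 : ℂ) 1 := by
  simp [Circle.norm_coe]

theorem circle_infinite : Infinite Circle := by
  have h : (sphere (0 : ℂ) 1).Infinite :=
    (isPreconnected_sphere (by rw [Complex.rank_real_complex]; norm_num) 0 1)
      |>.infinite_of_nontrivial ⟨1, by simp, -1, by simp, by norm_num⟩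
  exact h.to_subtype

section Module

variable {E F : Type*} [AddCommGroup E] [Module ℂ E] [AddCommGroup F] [Module ℂ F]

theorem seminorm_real_smul (q : Seminorm ℂ E) {r : ℝ} (hr : 0 ≤ r) (x : E) :
    q (r • x) = r * q x := by
  rw [← coe_smul, map_smul_eq_mul, norm_real, Real.norm_of_nonneg hr]

theorem seminorm_circle_smul (q : Seminorm ℂ E) (u : Circle) (x : E) : q (u • x) = q x := by
  rw [Circle.smul_def, map_smul_eq_mul, Circle.norm_coe, one_mul]

theorem map_complex_smul (L : E →ₗ[ℝ] F) (b : ℂ) (x : E) :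
    L (b • x) = b.re • L x + b.im • L (I • x) := by
  rw [← map_smul, ← map_smul, ← map_add]
  conv_lhs => rw [← re_add_im b, add_smul, mul_smul, coe_smul, coe_smul]

end Module

theorem closure_unitBall : closure (ball (0 : ℂ) 1) = closedBall 0 1 :=
  closure_ball 0 one_ne_zero

namespace MemSInf

variable {f g : ℂ → ℂ}

theorem differentiableAt (hf : MemSInf f) {z : ℂ} (hz : z ∈ ball (0 : ℂ) 1) :
    DifferentiableAt ℂ f z :=
  hf.1.differentiableAt (isOpen_ball.mem_nhds hz)

theorem congr (hf : MemSInf f) (h : EqOn f g (ball 0 1)) : MemSInf g := by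
  obtain ⟨hd, M, hM⟩ := hf
  refine ⟨hd.congr h.symm, M, fun z hz => ?_⟩
  rw [← (h.eventuallyEq_of_mem (isOpen_ball.mem_nhds hz)).deriv_eq]
  exact hM z hz

theorem add (hf : MemSInf f) (hg : MemSInf g) : MemSInf (f + g) := by
  obtain ⟨M, hM⟩ := hf.2
  obtain ⟨N, hN⟩ := hg.2
  refine ⟨hf.1.add hg.1, M + N, fun z hz => ?_⟩
  rw [deriv_add (hf.differentiableAt hz) (hg.differentiableAt hz)]
  exact norm_add_le_of_le (hM z hz) (hN z hz)

theorem const_smul (c : ℂ) (hf : MemSInf f) : MemSInf (c • f) := by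
  obtain ⟨M, hM⟩ := hf.2
  refine ⟨hf.1.const_smul c, ‖c‖ * M, fun z hz => ?_⟩
  rw [deriv_const_smul c (hf.differentiableAt hz), norm_smul]
  exact mul_le_mul_of_nonneg_left (hM z hz) (norm_nonneg c)

theorem sub (hf : MemSInf f) (hg : MemSInf g) : MemSInf (f - g) := by
  simpa [sub_eq_add_neg] using hf.add (hg.const_smul (-1))

theorem of_differentiable (hf : Differentiable ℂ f) : MemSInf f := by
  have hc : Continuous (deriv f) := (hf.contDiff (n := 1)).continuous_deriv le_rfl
  obtain ⟨M, hM⟩ := (isCompact_closedBall (0 : ℂ) 1).exists_bound_of_continuousOn hc.continuousOn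
  exact ⟨hf.differentiableOn, M, fun z hz => hM z (ball_subset_closedBall hz)⟩

theorem exists_lipschitzOnWith (hf : MemSInf f) : ∃ K, LipschitzOnWith K f (ball 0 1) := by
  obtain ⟨M, hM⟩ := hf.2
  refine ⟨M.toNNReal, (convex_ball (0 : ℂ) 1).lipschitzOnWith_of_nnnorm_deriv_le (𝕜 := ℂ)
    (fun z hz => hf.differentiableAt hz) fun z hz => ?_⟩
  rw [← NNReal.coe_le_coe, coe_nnnorm]
  exact (hM z hz).trans (Real.le_coe_toNNReal M)

end MemSInf

/-- The submodule of those representatives of elements of `𝒮^∞` that are continuous up to the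
closed disc and vanish outside of it; every element of `𝒮^∞` has exactly one. -/
def normalizedSubmodule : Submodule ℂ (ℂ → ℂ) where
  carrier := {f | MemSInf f ∧ ContinuousOn f (closedBall 0 1) ∧ ∀ z ∉ closedBall (0 : ℂ) 1, f z = 0}
  add_mem' hf hg := ⟨hf.1.add hg.1, hf.2.1.add hg.2.1, fun z hz => by
    simp [hf.2.2 z hz, hg.2.2 z hz]⟩
  zero_mem' := ⟨.of_differentiable (differentiable_const 0), continuousOn_const, fun _ _ => rfl⟩
  smul_mem' c _ hf := ⟨hf.1.const_smul c, hf.2.1.const_smul c, fun z hz => by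
    simp [hf.2.2 z hz]⟩

/-- The space `𝒮^∞` with the norm `‖·‖_Σ`. It is a type synonym of `normalizedSubmodule`, so that
it does not inherit the topology of pointwise convergence. -/
def SInf : Type := normalizedSubmodule

namespace SInf

noncomputable instance : AddCommGroup SInf := inferInstanceAs (AddCommGroup normalizedSubmodule)
noncomputable instance : Module ℂ SInf := inferInstanceAs (Module ℂ normalizedSubmodule)

instance : FunLike SInf ℂ ℂ where
  coe f := f.1
  coe_injective := Subtype.val_injective

@[simp] theorem add_apply (f g : SInf) (z : ℂ) : (f + g) z = f z + g z := rfl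
@[simp] theorem sub_apply (f g : SInf) (z : ℂ) : (f - g) z = f z - g z := rfl
@[simp] theorem neg_apply (f : SInf) (z : ℂ) : (-f) z = -f z := rfl
@[simp] theorem smul_apply (c : ℂ) (f : SInf) (z : ℂ) : (c • f) z = c * f z := rfl
@[simp] theorem real_smul_apply (r : ℝ) (f : SInf) (z : ℂ) : (r • f) z = r * f z := rfl
@[simp] theorem circle_smul_apply (u : Circle) (f : SInf) (z : ℂ) : (u • f) z = u * f z := rfl

theorem memSInf (f : SInf) : MemSInf f := f.2.1

theorem continuousOn (f : SInf) : ContinuousOn f (closedBall 0 1) := f.2.2.1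

theorem differentiableAt (f : SInf) {z : ℂ} (hz : z ∈ ball (0 : ℂ) 1) : DifferentiableAt ℂ f z :=
  f.memSInf.differentiableAt hz

theorem diffContOnCl (f : SInf) : DiffContOnCl ℂ f (ball 0 1) :=
  ⟨f.memSInf.1, closure_unitBall ▸ f.continuousOn⟩

theorem ext_closedBall {f g : SInf} (h : EqOn f g (closedBall 0 1)) : f = g :=
  DFunLike.ext f g fun z => by
    by_cases hz : z ∈ closedBall (0 : ℂ) 1
    · exact h hz
    · exact (f.2.2.2 z hz).trans (g.2.2.2 z hz).symm

theorem ext_ball {f g : SInf} (h : EqOn f g (ball 0 1)) : f = g :=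
  ext_closedBall <| h.of_subset_closure f.continuousOn g.continuousOn ball_subset_closedBall
    closure_unitBall.ge

theorem bddAbove_norm (f : SInf) : BddAbove (range fun z : ball (0 : ℂ) 1 => ‖f z‖) := by
  obtain ⟨M, hM⟩ := (isCompact_closedBall (0 : ℂ) 1).exists_bound_of_continuousOn f.continuousOn
  exact ⟨M, forall_mem_range.2 fun z => hM z (ball_subset_closedBall z.2)⟩

theorem bddAbove_norm_deriv (f : SInf) :
    BddAbove (range fun z : ball (0 : ℂ) 1 => ‖deriv f z‖) := by
  obtain ⟨M, hM⟩ := f.memSInf.2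
  exact ⟨M, forall_mem_range.2 fun z => hM z z.2⟩

theorem deriv_add (f g : SInf) {z : ℂ} (hz : z ∈ ball (0 : ℂ) 1) :
    deriv (f + g : SInf) z = deriv f z + deriv g z :=
  _root_.deriv_add (f.differentiableAt hz) (g.differentiableAt hz)

theorem deriv_smul (c : ℂ) (f : SInf) {z : ℂ} (hz : z ∈ ball (0 : ℂ) 1) :
    deriv (c • f : SInf) z = c * deriv f z :=
  deriv_const_smul c (f.differentiableAt hz)

instance : Nonempty (ball (0 : ℂ) 1) := ⟨⟨0, mem_ball_self one_pos⟩⟩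

/-- The seminorm `sup_{z ∈ 𝔻} |f(z)|`. -/
noncomputable def supNorm : Seminorm ℂ SInf :=
  .ofSMulLE (fun f => ⨆ z : ball (0 : ℂ) 1, ‖f z‖) (by simp [show ⇑(0 : SInf) = 0 from rfl])
    (fun f g => ciSup_le fun z => norm_add_le_of_le
      (le_ciSup f.bddAbove_norm z) (le_ciSup g.bddAbove_norm z))
    fun c f => ciSup_le fun z => by
      rw [smul_apply, norm_mul]
      exact mul_le_mul_of_nonneg_left (le_ciSup f.bddAbove_norm z) (norm_nonneg c)

/-- The seminorm `sup_{w ∈ 𝔻} |f'(w)|`. -/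
noncomputable def derivNorm : Seminorm ℂ SInf :=
  .ofSMulLE (fun f => ⨆ z : ball (0 : ℂ) 1, ‖deriv f z‖) (by simp [show ⇑(0 : SInf) = 0 from rfl])
    (fun f g => ciSup_le fun z => by
      rw [deriv_add f g z.2]
      exact norm_add_le_of_le (le_ciSup f.bddAbove_norm_deriv z) (le_ciSup g.bddAbove_norm_deriv z))
    fun c f => ciSup_le fun z => by
      rw [deriv_smul c f z.2, norm_mul]
      exact mul_le_mul_of_nonneg_left (le_ciSup f.bddAbove_norm_deriv z) (norm_nonneg c)

theorem supNorm_le {f : SInf} {M : ℝ} (h : ∀ z ∈ ball (0 : ℂ) 1, ‖f z‖ ≤ M) : supNorm f ≤ M :=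
  ciSup_le fun z => h z z.2

theorem norm_apply_le_supNorm (f : SInf) {z : ℂ} (hz : z ∈ closedBall (0 : ℂ) 1) :
    ‖f z‖ ≤ supNorm f := by
  rw [← closure_unitBall] at hz
  exact le_on_closure (f := fun z => ‖f z‖) (fun w hw => le_ciSup f.bddAbove_norm ⟨w, hw⟩)
    (closure_unitBall ▸ f.continuousOn.norm) continuousOn_const hz

theorem derivNorm_le {f : SInf} {M : ℝ} (h : ∀ z ∈ ball (0 : ℂ) 1, ‖deriv f z‖ ≤ M) :
    derivNorm f ≤ M :=
  ciSup_le fun z => h z z.2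

theorem norm_deriv_le_derivNorm (f : SInf) {z : ℂ} (hz : z ∈ ball (0 : ℂ) 1) :
    ‖deriv f z‖ ≤ derivNorm f :=
  le_ciSup f.bddAbove_norm_deriv ⟨z, hz⟩

theorem exists_norm_apply_eq_supNorm (f : SInf) :
    ∃ z ∈ closedBall (0 : ℂ) 1, ‖f z‖ = supNorm f := by
  obtain ⟨z, hz, hmax⟩ := (isCompact_closedBall (0 : ℂ) 1).exists_isMaxOn
    ⟨0, by simp⟩ f.continuousOn.norm
  exact ⟨z, hz, (norm_apply_le_supNorm f hz).antisymm
    (supNorm_le fun w hw => hmax (ball_subset_closedBall hw))⟩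

noncomputable instance : Norm SInf := ⟨fun f => supNorm f + derivNorm f⟩

theorem norm_def (f : SInf) : ‖f‖ = supNorm f + derivNorm f := rfl

theorem normedSpaceCore : NormedSpace.Core ℂ SInf where
  norm_nonneg f := add_nonneg (apply_nonneg supNorm f) (apply_nonneg derivNorm f)
  norm_smul c f := by simp only [norm_def, map_smul_eq_mul, mul_add]
  norm_triangle f g := by
    simp only [norm_def]
    linarith [map_add_le_add supNorm f g, map_add_le_add derivNorm f g]
  norm_eq_zero_iff f := by
    refine ⟨fun h => ext_closedBall fun z hz => ?_, by rintro rfl; simp [norm_def]⟩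
    have hle := norm_apply_le_supNorm f hz
    rw [norm_def] at h
    have hz0 : ‖f z‖ ≤ 0 := by linarith [apply_nonneg derivNorm f]
    exact norm_le_zero_iff.1 hz0

noncomputable instance : NormedAddCommGroup SInf := NormedAddCommGroup.ofCore normedSpaceCore
noncomputable instance : NormedSpace ℂ SInf := NormedSpace.ofCore normedSpaceCore

theorem norm_eq_normSigma (f : SInf) : ‖f‖ = normSigma f := rfl

theorem norm_apply_sub_le (f : SInf) {x y : ℂ} (hx : x ∈ closedBall (0 : ℂ) 1)
    (hy : y ∈ closedBall (0 : ℂ) 1) : ‖f x - f y‖ ≤ derivNorm f * ‖x - y‖ := by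
  have hlip : LipschitzOnWith ⟨derivNorm f, apply_nonneg _ f⟩ f (ball (0 : ℂ) 1) :=
    (convex_ball (0 : ℂ) 1).lipschitzOnWith_of_nnnorm_deriv_le (𝕜 := ℂ)
      (fun z hz => f.differentiableAt hz) fun z hz => norm_deriv_le_derivNorm f hz
  have hlip' := hlip.closure (closure_unitBall ▸ f.continuousOn)
  rw [closure_unitBall] at hlip'
  exact hlip'.norm_sub_le hx hy

theorem apply_eq_of_derivNorm_eq_zero {f : SInf} (h : derivNorm f = 0) {z : ℂ}
    (hz : z ∈ closedBall (0 : ℂ) 1) : f z = f 0 := by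
  have hle := norm_apply_sub_le f hz (mem_closedBall_self zero_le_one)
  rw [h, zero_mul] at hle
  exact sub_eq_zero.1 (norm_le_zero_iff.1 hle)

/-- The element of `SInf` represented by `f`. -/
noncomputable def ofMem (f : ℂ → ℂ) (hf : MemSInf f) (hc : ContinuousOn f (closedBall 0 1)) :
    SInf :=
  ⟨indicator (closedBall 0 1) f,
    hf.congr fun _ hz => (indicator_of_mem (ball_subset_closedBall hz) f).symm,
    hc.congr fun _ hz => indicator_of_mem hz f, fun _ hz => indicator_of_notMem hz f⟩

theorem ofMem_apply {f : ℂ → ℂ} (hf : MemSInf f) (hc : ContinuousOn f (closedBall 0 1)) {z : ℂ}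
    (hz : z ∈ closedBall (0 : ℂ) 1) : ofMem f hf hc z = f z :=
  indicator_of_mem hz f

theorem exists_eqOn_ball {f : ℂ → ℂ} (hf : MemSInf f) : ∃ F : SInf, EqOn F f (ball 0 1) := by
  obtain ⟨K, hK⟩ := hf.exists_lipschitzOnWith
  obtain ⟨g, hg, hfg⟩ := hK.extend_finite_dimension
  refine ⟨ofMem g (hf.congr hfg) hg.continuous.continuousOn, fun z hz => ?_⟩
  rw [ofMem_apply _ _ (ball_subset_closedBall hz), hfg hz]

/-- The polynomial `a + b z + c z²`. -/
noncomputable def quad (a b c : ℂ) : SInf :=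
  ofMem (fun z => a + b * z + c * z ^ 2) (.of_differentiable (by fun_prop))
    (by fun_prop : Continuous _).continuousOn

theorem quad_apply (a b c : ℂ) {z : ℂ} (hz : z ∈ closedBall (0 : ℂ) 1) :
    quad a b c z = a + b * z + c * z ^ 2 := ofMem_apply _ _ hz

theorem deriv_quad (a b c : ℂ) {z : ℂ} (hz : z ∈ ball (0 : ℂ) 1) :
    deriv (quad a b c) z = b + 2 * c * z := by
  have heq : EqOn (quad a b c) (fun z => a + b * z + c * z ^ 2) (ball 0 1) :=
    fun w hw => quad_apply a b c (ball_subset_closedBall hw)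
  rw [(heq.eventuallyEq_of_mem (isOpen_ball.mem_nhds hz)).deriv_eq]
  have hd : HasDerivAt (fun z : ℂ => a + b * z + c * z ^ 2) (b * 1 + c * (2 * z ^ 1 * 1)) z :=
    (((hasDerivAt_id z).const_mul b).const_add a).add (((hasDerivAt_id z).pow 2).const_mul c)
  rw [hd.deriv]
  ring

theorem quad_add (a b c a' b' c' : ℂ) :
    quad a b c + quad a' b' c' = quad (a + a') (b + b') (c + c') :=
  ext_closedBall fun z hz => by
    rw [add_apply, quad_apply _ _ _ hz, quad_apply _ _ _ hz, quad_apply _ _ _ hz]; ring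

theorem quad_sub (a b c a' b' c' : ℂ) :
    quad a b c - quad a' b' c' = quad (a - a') (b - b') (c - c') :=
  ext_closedBall fun z hz => by
    rw [sub_apply, quad_apply _ _ _ hz, quad_apply _ _ _ hz, quad_apply _ _ _ hz]; ring

theorem smul_quad (t a b c : ℂ) : t • quad a b c = quad (t * a) (t * b) (t * c) :=
  ext_closedBall fun z hz => by
    rw [smul_apply, quad_apply _ _ _ hz, quad_apply _ _ _ hz]; ring

theorem real_smul_quad (t : ℝ) (a b c : ℂ) : t • quad a b c = quad (t * a) (t * b) (t * c) :=
  smul_quad t a b c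

theorem circle_smul_quad (u : Circle) (a b c : ℂ) : u • quad a b c = quad (u * a) (u * b) (u * c) :=
  smul_quad u a b c

theorem quad_linear_eq_smul (b : ℂ) : quad 0 b 0 = b • quad 0 1 0 := by simp [smul_quad]

theorem quad_linear_apply (b : ℂ) (x : Circle) : quad 0 b 0 x = b * x := by
  simp [quad_apply _ _ _ (circle_coe_mem_closedBall x)]

theorem quad_linear_one_apply (x : Circle) : quad 0 1 0 x = x := by
  rw [quad_linear_apply, one_mul]

theorem norm_add_mul_le_derivNorm_quad (a b c : ℂ) {z : ℂ} (hz : z ∈ closedBall (0 : ℂ) 1) :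
    ‖b + 2 * c * z‖ ≤ derivNorm (quad a b c) := by
  rw [← closure_unitBall] at hz
  refine le_on_closure (f := fun z => ‖b + 2 * c * z‖) (fun w hw => ?_) (by fun_prop)
    continuousOn_const hz
  exact (deriv_quad a b c hw) ▸ norm_deriv_le_derivNorm (quad a b c) hw

theorem derivNorm_quad_linear (a b : ℂ) : derivNorm (quad a b 0) = ‖b‖ := by
  refine le_antisymm (derivNorm_le fun z hz => (by simp [deriv_quad a b 0 hz])) ?_
  simpa using norm_add_mul_le_derivNorm_quad a b 0 (mem_closedBall_self zero_le_one)

theorem supNorm_quad_const (a : ℂ) : supNorm (quad a 0 0) = ‖a‖ := by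
  refine le_antisymm (supNorm_le fun z hz => ?_) ?_
  · simp [quad_apply a 0 0 (ball_subset_closedBall hz)]
  · simpa [quad_apply a 0 0 (mem_closedBall_self zero_le_one)] using
      norm_apply_le_supNorm (quad a 0 0) (mem_closedBall_self zero_le_one)

theorem quad_linear_one_ne_zero : quad 0 1 0 ≠ 0 := fun h => by
  simpa [h] using derivNorm_quad_linear 0 1

theorem quad_square_one_ne_zero : quad 0 0 1 ≠ 0 := fun h => by
  have h1 := norm_add_mul_le_derivNorm_quad 0 0 1 (circle_coe_mem_closedBall 1)
  norm_num [h] at h1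

/-- The isometric embedding of `ℂ` as the constant functions. -/
noncomputable def const : ℂ →ₗᵢ[ℝ] SInf where
  toFun c := quad c 0 0
  map_add' c d := by simp [quad_add]
  map_smul' r c := by simp [real_smul_quad]
  norm_map' c := by simp [norm_def, supNorm_quad_const, derivNorm_quad_linear]

theorem const_eq_quad (c : ℂ) : const c = quad c 0 0 := rfl

theorem const_apply (c : ℂ) {z : ℂ} (hz : z ∈ closedBall (0 : ℂ) 1) : const c z = c := by
  simp [const_eq_quad, quad_apply c 0 0 hz]

theorem eq_const_of_derivNorm_eq_zero {f : SInf} (h : derivNorm f = 0) : f = const (f 0) :=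
  ext_closedBall fun z hz => by rw [const_apply _ hz, apply_eq_of_derivNorm_eq_zero h hz]

theorem derivNorm_const (c : ℂ) : derivNorm (const c) = 0 := by
  rw [const_eq_quad, derivNorm_quad_linear, norm_zero]

theorem derivNorm_add_const (f : SInf) (c : ℂ) : derivNorm (f + const c) = derivNorm f := by
  refine le_antisymm ?_ ?_
  · simpa [derivNorm_const] using map_add_le_add derivNorm f (const c)
  · simpa [derivNorm_const] using map_sub_le_add derivNorm (f + const c) (const c)

end SInf

section NormedSpace

variable {V E F : Type*} [NormedAddCommGroup V] [NormedSpace ℝ V] [NormedAddCommGroup E]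
  [NormedSpace ℝ E] [NormedAddCommGroup F] [NormedSpace ℝ F]

theorem apply_ne_zero_of_norm_eq_one (κ : V →ₗᵢ[ℝ] E) {c : V} (hc : ‖c‖ = 1) : κ c ≠ 0 := by
  rw [← norm_pos_iff, κ.norm_map, hc]
  exact one_pos

/-- An isometric embedding `κ` is aligned if the norm of the target is additive on every vector `g`
and a suitable unit vector `κ c`. Surjective linear isometries preserve this property of the
embedding of the constants into `𝒮^∞`. -/
def IsAligned (κ : V →ₗᵢ[ℝ] E) : Prop :=
  ∀ g, ∃ c, ‖c‖ = 1 ∧ ‖κ c + g‖ = ‖κ c‖ + ‖g‖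

namespace IsAligned

variable {κ : V →ₗᵢ[ℝ] E}

theorem comp (hκ : IsAligned κ) (U : E ≃ₗᵢ[ℝ] F) :
    IsAligned (U.toLinearIsometry.comp κ) := fun g => by
  obtain ⟨c, hc, hcg⟩ := hκ (U.symm g)
  refine ⟨c, hc, ?_⟩
  have h := U.norm_map (κ c + U.symm g)
  rw [map_add, U.apply_symm_apply, hcg, U.symm.norm_map] at h
  simpa using h

theorem exists_frequently_norm_add_eq [ProperSpace V] (hκ : IsAligned κ) (f g : E) :
    ∃ c₀, ‖c₀‖ = 1 ∧ ‖κ c₀ + g‖ = ‖κ c₀‖ + ‖g‖ ∧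
      ∃ᶠ c in 𝓝 c₀, ∃ s ∈ Ioc (0 : ℝ) 1, ‖κ c + (g + s • f)‖ = ‖κ c‖ + ‖g + s • f‖ := by
  let s (n : ℕ) : ℝ := 1 / (n + 1)
  choose c hc hcg using fun n => hκ (g + s n • f)
  obtain ⟨c₀, hc₀, φ, hφ, hlim⟩ := (isCompact_sphere (0 : V) 1).tendsto_subseq
    fun n => mem_sphere_zero_iff_norm.2 (hc n)
  have hs (n : ℕ) : s n ∈ Ioc (0 : ℝ) 1 :=
    ⟨Nat.one_div_pos_of_nat, div_le_one_of_le₀ (by simp) (by positivity)⟩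
  refine ⟨c₀, mem_sphere_zero_iff_norm.1 hc₀, ?_, hlim.frequently (Frequently.of_forall fun n =>
    ⟨s (φ n), hs (φ n), hcg (φ n)⟩)⟩
  have hs0 : Tendsto (s ∘ φ) atTop (𝓝 0) :=
    tendsto_one_div_add_atTop_nhds_zero_nat.comp hφ.tendsto_atTop
  have hglim : Tendsto (fun n => g + s (φ n) • f) atTop (𝓝 g) := by
    simpa using (hs0.smul_const f).const_add g
  have hκlim : Tendsto (fun n => κ (c (φ n))) atTop (𝓝 (κ c₀)) :=
    (κ.continuous.tendsto c₀).comp hlim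
  exact tendsto_nhds_unique ((hκlim.add hglim).norm.congr fun n => hcg (φ n))
    (hκlim.norm.add hglim.norm)

end IsAligned

end NormedSpace

theorem eq_mul_of_le_re {w : ℂ} {u : Circle} {ρ : ℝ} (hw : ‖w‖ ≤ ρ)
    (h : ρ ≤ ((u⁻¹ : Circle) * w : ℂ).re) : w = ρ * u := by
  have hadd : ρ + 1 ≤ ‖w + u‖ := calc
    ρ + 1 ≤ ((u⁻¹ : Circle) * (w + u) : ℂ).re := by
      rw [mul_add, ← Circle.coe_mul, inv_mul_cancel, Circle.coe_one, add_re, one_re]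
      linarith
    _ ≤ ‖((u⁻¹ : Circle) * (w + u) : ℂ)‖ := re_le_norm _
    _ = ‖w + u‖ := by rw [norm_mul, Circle.norm_coe, one_mul]
  simpa using (smul_eq_smul_of_add_le_norm_add hw (Circle.norm_coe u).le hadd).symm

namespace SInf

theorem ext_circle {f g : SInf} (h : ∀ x : Circle, f x = g x) : f = g := by
  refine ext_closedBall ?_
  rw [← closure_unitBall]
  refine eqOn_closure_of_eqOn_frontier isBounded_ball f.diffContOnCl g.diffContOnCl ?_
  rw [frontier_ball _ one_ne_zero]
  exact fun x hx => h ⟨x, hx⟩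

/-- Evaluation at a point as a linear functional. -/
def evalₗ (z : ℂ) : SInf →ₗ[ℝ] ℂ where
  toFun f := f z
  map_add' _ _ := rfl
  map_smul' _ _ := rfl

theorem supNorm_pos {f : SInf} (hf : f ≠ 0) : 0 < supNorm f :=
  (apply_nonneg supNorm f).lt_of_ne' fun h => hf <| ext_closedBall fun _ hz =>
    norm_le_zero_iff.1 (h ▸ norm_apply_le_supNorm f hz)

theorem supNorm_add_of_norm_add {f g : SInf} (h : ‖f + g‖ = ‖f‖ + ‖g‖) :
    supNorm (f + g) = supNorm f + supNorm g := by
  simp only [norm_def] at h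
  linarith [map_add_le_add supNorm f g, map_add_le_add derivNorm f g]

theorem derivNorm_add_of_norm_add {f g : SInf} (h : ‖f + g‖ = ‖f‖ + ‖g‖) :
    derivNorm (f + g) = derivNorm f + derivNorm g := by
  simp only [norm_def] at h
  linarith [map_add_le_add supNorm f g, map_add_le_add derivNorm f g]

theorem isAligned_const : IsAligned const := fun g => by
  obtain ⟨z, hz, hsup⟩ := exists_norm_apply_eq_supNorm g
  obtain ⟨u, hu⟩ := exists_circle_norm_smul_eq (g z)
  refine ⟨u, Circle.norm_coe u, (norm_add_le _ _).antisymm ?_⟩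
  have hval : ‖(const u + g) z‖ = 1 + supNorm g := by
    have hfactor : (const u + g) z = ((1 + supNorm g : ℝ) : ℂ) * u := by
      rw [add_apply, const_apply _ hz, hu, hsup]
      push_cast
      ring
    rw [hfactor, norm_mul, Circle.norm_coe, mul_one, norm_real, Real.norm_of_nonneg]
    linarith [apply_nonneg supNorm g]
  have hle := norm_apply_le_supNorm (const u + g) hz
  rw [const.norm_map, Circle.norm_coe, norm_def, norm_def, add_comm (const _) g,
    derivNorm_add_const]
  rw [add_comm (const _) g] at hle hval
  linarith

/-- The function `t (1 + z / ζ) / 2`, which attains its maximum modulus, with value `t`, only at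
the boundary point `ζ`. -/
noncomputable def peak (t ζ : Circle) : SInf := quad (t / 2) (t / ζ / 2) 0

theorem peak_apply (t ζ : Circle) {z : ℂ} (hz : z ∈ closedBall (0 : ℂ) 1) :
    peak t ζ z = t / 2 * (1 + z / ζ) := by
  rw [peak, quad_apply _ _ _ hz]
  ring

theorem norm_peak_apply (t ζ : Circle) {z : ℂ} (hz : z ∈ closedBall (0 : ℂ) 1) :
    ‖peak t ζ z‖ = ‖1 + z / ζ‖ / 2 := by
  rw [peak_apply t ζ hz, norm_mul, norm_div, Circle.norm_coe, norm_ofNat, one_div_mul_eq_div]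

theorem peak_apply_self (t ζ : Circle) : peak t ζ ζ = t := by
  rw [peak_apply _ _ (circle_coe_mem_closedBall ζ), div_self ζ.coe_ne_zero]
  ring

theorem norm_peak_apply_le (t ζ : Circle) {z : ℂ} (hz : z ∈ closedBall (0 : ℂ) 1) :
    ‖peak t ζ z‖ ≤ 1 := by
  have h := norm_add_le 1 (z / ζ)
  rw [norm_div, Circle.norm_coe, norm_one, div_one] at h
  rw [norm_peak_apply t ζ hz]
  linarith [mem_closedBall_zero_iff.1 hz]

theorem eq_of_one_le_norm_peak_apply {t ζ : Circle} {z : ℂ} (hz : z ∈ closedBall (0 : ℂ) 1)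
    (h : 1 ≤ ‖peak t ζ z‖) : z = ζ := by
  rw [norm_peak_apply t ζ hz] at h
  have hle : ‖z / ζ‖ ≤ 1 := by simpa [Circle.norm_coe] using hz
  have heq := smul_eq_smul_of_add_le_norm_add norm_one.le hle (by linarith)
  simp only [one_smul] at heq
  exact (div_eq_one_iff_eq ζ.coe_ne_zero).1 heq

theorem derivNorm_peak (t ζ : Circle) : derivNorm (peak t ζ) = 1 / 2 := by
  simp [peak, derivNorm_quad_linear, Circle.norm_coe]

theorem apply_eq_of_norm_add_peak {t ζ : Circle} {f : SInf}
    (h : ‖f + peak t ζ‖ = ‖f‖ + ‖peak t ζ‖) : f ζ = supNorm f * t := by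
  obtain ⟨z, hz, hmax⟩ := exists_norm_apply_eq_supNorm (f + peak t ζ)
  have hf := norm_apply_le_supNorm f hz
  have hpeak := norm_peak_apply_le t ζ hz
  have hone : 1 ≤ supNorm (peak t ζ) := by
    simpa [peak_apply_self, Circle.norm_coe] using
      norm_apply_le_supNorm (peak t ζ) (circle_coe_mem_closedBall ζ)
  have hadd : supNorm f + 1 ≤ ‖f z + peak t ζ z‖ := by
    rw [← add_apply, hmax, supNorm_add_of_norm_add h]
    linarith
  have hle := norm_add_le (f z) (peak t ζ z)
  obtain rfl := eq_of_one_le_norm_peak_apply hz (by linarith)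
  simpa [peak_apply_self] using (smul_eq_smul_of_add_le_norm_add hf hpeak hadd).symm

theorem apply_eq_mul_of_norm_linear_add {f : SInf} {b : ℝ} (hb : 0 < b)
    (h : ‖quad 0 b 0 + f‖ = ‖quad 0 b 0‖ + ‖f‖) : ∃ x : Circle, f x = supNorm f * x := by
  obtain ⟨x, hx, hmax⟩ := exists_norm_apply_eq_supNorm (quad 0 b 0 + f)
  have hlin : ‖(b * x : ℂ)‖ ≤ b := by
    rw [norm_mul, norm_real, Real.norm_of_nonneg hb.le]
    exact mul_le_of_le_one_right hb.le (mem_closedBall_zero_iff.1 hx)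
  have hsup : b ≤ supNorm (quad 0 b 0) := by
    simpa [quad_apply, abs_of_pos hb] using
      norm_apply_le_supNorm (quad 0 b 0) (z := 1) (by simp)
  have hadd : b + supNorm f ≤ ‖b * x + f x‖ := by
    rw [add_apply, quad_apply _ _ _ hx, supNorm_add_of_norm_add h] at hmax
    simp only [zero_add, zero_mul, add_zero] at hmax
    linarith
  have hfx := norm_apply_le_supNorm f hx
  have hnorm : ‖x‖ = 1 := by
    have hle := norm_add_le (b * x) (f x)
    rw [norm_mul, norm_real, Real.norm_of_nonneg hb.le] at hle
    nlinarith [mem_closedBall_zero_iff.1 hx]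
  have heq := smul_eq_smul_of_add_le_norm_add hlin hfx hadd
  simp only [real_smul] at heq
  refine ⟨⟨x, mem_sphere_zero_iff_norm.2 hnorm⟩, mul_left_cancel₀ (ofReal_ne_zero.2 hb.ne') ?_⟩
  rw [heq]
  ring

theorem norm_linear_add_quad_ne {b : ℂ} (hb : b ≠ 0) :
    ‖quad 0 b 0 + quad 1 1 I‖ ≠ ‖quad 0 b 0‖ + ‖quad 1 1 I‖ := fun h => by
  have hmem (z : ℂ) (hz : ‖z‖ = 1) : z ∈ closedBall (0 : ℂ) 1 := mem_closedBall_zero_iff.2 hz.le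
  obtain ⟨r, hr, rfl⟩ : ∃ r : ℝ, 0 < r ∧ b = r := by
    have hthree : 3 ≤ derivNorm (quad 1 1 I) := by
      convert norm_add_mul_le_derivNorm_quad 1 1 I (hmem (-I) (by simp)) using 1
      rw [show 1 + 2 * I * -I = (3 : ℂ) by linear_combination -2 * I_sq]
      norm_num
    have hle : derivNorm (quad 0 b 0 + quad 1 1 I) ≤ ‖b + 1‖ + 2 := by
      rw [quad_add]
      refine derivNorm_le fun z hz => ?_
      rw [deriv_quad _ _ _ hz]
      refine norm_add_le_of_le le_rfl ?_
      simpa using (mem_ball_zero_iff.1 hz).le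
    rw [derivNorm_add_of_norm_add h, derivNorm_quad_linear] at hle
    have heq := smul_eq_smul_of_add_le_norm_add le_rfl norm_one.le
      (show ‖b‖ + 1 ≤ ‖b + 1‖ by linarith)
    exact ⟨‖b‖, norm_pos_iff.2 hb, by simpa using heq.symm⟩
  obtain ⟨x, hx⟩ := apply_eq_mul_of_norm_linear_add hr h
  have htwo : 2 ≤ supNorm (quad 1 1 I) := by
    have hle := norm_apply_le_supNorm (quad 1 1 I) (hmem 1 norm_one)
    rw [quad_apply _ _ _ (hmem 1 norm_one)] at hle
    refine le_trans ?_ ((re_le_norm _).trans hle)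
    norm_num
  rw [quad_apply _ _ _ (circle_coe_mem_closedBall x)] at hx
  have hmul : conj (x : ℂ) + 1 + I * x = supNorm (quad 1 1 I) := by
    linear_combination conj (x : ℂ) * hx + (supNorm (quad 1 1 I) - 1 - I * x) * conj_mul_circle x
  have hre := congrArg re hmul
  have him := congrArg im hmul
  simp only [add_re, add_im, conj_re, conj_im, one_re, one_im, I_mul_re, I_mul_im, ofReal_re,
    ofReal_im] at hre him
  linarith

theorem le_derivNorm_peak_add_smul_neg (f : SInf) (t ζ : Circle) (s : ℝ) :
    1 / 2 - s * (((t / ζ)⁻¹ : Circle) * deriv f 0 : ℂ).re ≤ derivNorm (peak t ζ + s • -f) := by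
  have h0 : (0 : ℂ) ∈ ball (0 : ℂ) 1 := mem_ball_self one_pos
  have hderiv : deriv (peak t ζ + s • -f : SInf) 0 = (t / ζ : Circle) / 2 - s * deriv f 0 := by
    rw [deriv_add _ _ h0, peak, deriv_quad _ _ _ h0, show s • -f = (-s : ℂ) • f by simp,
      deriv_smul _ _ h0, Circle.coe_div]
    ring
  calc
    _ = (((t / ζ)⁻¹ : Circle) * ((t / ζ : Circle) / 2 - s * deriv f 0) : ℂ).re := by
      rw [mul_sub, mul_left_comm, sub_re, re_ofReal_mul, ← mul_div_assoc, ← Circle.coe_mul,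
        inv_mul_cancel]
      simp
    _ ≤ _ := re_le_norm _
    _ ≤ _ := by
      rw [norm_mul, Circle.norm_coe, one_mul, ← hderiv]
      exact norm_deriv_le_derivNorm _ h0

/- Perturbing the peak function by `-s • f` compares the direction of `f' 0` with that of the
derivative of the peak function. -/
theorem derivNorm_le_re_deriv {f : SInf} {t ζ : Circle}
    (h : ∃ᶠ v in 𝓝 f, ∃ s ∈ Ioc (0 : ℝ) 1,
      ‖v + (peak t ζ + s • -f)‖ = ‖v‖ + ‖peak t ζ + s • -f‖) :
    derivNorm f ≤ (((t / ζ)⁻¹ : Circle) * deriv f 0 : ℂ).re := by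
  set d : ℝ := (((t / ζ)⁻¹ : Circle) * deriv f 0 : ℂ).re
  have hlim : Tendsto (fun v => d + 2 * ‖v - f‖) (𝓝 f) (𝓝 d) := by
    have hcont : Continuous fun v : SInf => d + 2 * ‖v - f‖ := by fun_prop
    simpa using hcont.tendsto f
  refine ge_of_tendsto_of_frequently hlim (h.mono ?_)
  rintro v ⟨s, ⟨hs0, hs1⟩, hadd⟩
  have hsplit : derivNorm v + derivNorm (peak t ζ + s • -f) ≤
      (1 - s) * derivNorm v + s * derivNorm (v - f) + 1 / 2 := calc
    _ = derivNorm ((1 - s) • v + s • (v - f) + peak t ζ) := by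
      rw [← derivNorm_add_of_norm_add hadd]
      congr 1
      module
    _ ≤ derivNorm ((1 - s) • v) + derivNorm (s • (v - f)) + derivNorm (peak t ζ) := by
      refine (map_add_le_add derivNorm _ _).trans ?_
      gcongr
      exact map_add_le_add derivNorm _ _
    _ = _ := by
      rw [seminorm_real_smul _ (sub_nonneg.2 hs1), seminorm_real_smul _ hs0.le, derivNorm_peak]
  have hlow : 1 / 2 - s * d ≤ derivNorm (peak t ζ + s • -f) :=
    le_derivNorm_peak_add_smul_neg f t ζ s
  have hd : derivNorm v - derivNorm (v - f) ≤ d := by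
    refine le_of_mul_le_mul_left ?_ hs0
    linarith
  have hf : derivNorm f ≤ derivNorm v + derivNorm (v - f) := by
    simpa using map_sub_le_add derivNorm v (v - f)
  have hnorm : derivNorm (v - f) ≤ ‖v - f‖ := by
    rw [norm_def]
    linarith [apply_nonneg supNorm (v - f)]
  linarith

end SInf

namespace IsAligned

open SInf

variable {κ : ℂ →ₗᵢ[ℝ] SInf}

theorem injective_apply (hκ : IsAligned κ) (ζ : Circle) :
    Function.Injective (evalₗ ζ ∘ₗ κ.toLinearMap) := by
  refine LinearMap.injective_iff_surjective.2 fun w => ?_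
  obtain ⟨t, ht⟩ := exists_circle_norm_smul_eq w
  obtain ⟨c, hc, hadd⟩ := hκ (peak t ζ)
  have hpos : (supNorm (κ c) : ℂ) ≠ 0 := by exact_mod_cast
    (supNorm_pos (apply_ne_zero_of_norm_eq_one κ hc)).ne'
  refine ⟨(‖w‖ / supNorm (κ c)) • c, ?_⟩
  have heval : κ c ζ = supNorm (κ c) * t := apply_eq_of_norm_add_peak hadd
  rw [map_smul]
  change (‖w‖ / supNorm (κ c)) • κ c ζ = w
  rw [heval, real_smul, ofReal_div, ← mul_assoc, div_mul_cancel₀ _ hpos, ← ht]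

theorem eq_of_norm_add_peak (hκ : IsAligned κ) {t ζ : Circle} {c c' : ℂ} (hc : ‖c‖ = 1)
    (hc' : ‖c'‖ = 1) (ht : κ c ζ = ‖κ c ζ‖ * t)
    (hadd : ‖κ c' + peak t ζ‖ = ‖κ c'‖ + ‖peak t ζ‖) : c' = c := by
  refine (sameRay_iff_of_norm_eq (hc'.trans hc.symm)).1
    ((hκ.injective_apply ζ).sameRay_map_iff.1 ?_)
  change SameRay ℝ (κ c' ζ) (κ c ζ)
  rw [apply_eq_of_norm_add_peak hadd, ht, ← real_smul, ← real_smul]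
  exact (SameRay.sameRay_nonneg_smul_left _ (apply_nonneg supNorm _)).nonneg_smul_right
    (norm_nonneg _)

theorem exists_circle_apply_eq_and_deriv_eq (hκ : IsAligned κ) {c : ℂ} (hc : ‖c‖ = 1) (ζ : Circle) :
    ∃ t : Circle, κ c ζ = supNorm (κ c) * t ∧ deriv (κ c) 0 = derivNorm (κ c) * (t / ζ) := by
  obtain ⟨t, ht⟩ := exists_circle_norm_smul_eq (κ c ζ)
  obtain ⟨c₀, hc₀, hadd, hfreq⟩ := hκ.exists_frequently_norm_add_eq (-κ c) (peak t ζ)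
  obtain rfl := hκ.eq_of_norm_add_peak hc hc₀ ht hadd
  refine ⟨t, apply_eq_of_norm_add_peak hadd, ?_⟩
  rw [← Circle.coe_div]
  exact eq_mul_of_le_re (norm_deriv_le_derivNorm _ (mem_ball_self one_pos))
    (derivNorm_le_re_deriv ((κ.continuous.tendsto c₀).frequently hfreq))

theorem eq_const_or_eq_linear (hκ : IsAligned κ) {c : ℂ} (hc : ‖c‖ = 1) :
    (∃ a, κ c = const a) ∨ ∃ b, κ c = quad 0 b 0 := by
  rcases eq_or_ne (derivNorm (κ c)) 0 with hp | hp
  · exact .inl ⟨_, eq_const_of_derivNorm_eq_zero hp⟩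
  refine .inr ⟨supNorm (κ c) * deriv (κ c) 0 / derivNorm (κ c), ext_circle fun ζ => ?_⟩
  obtain ⟨t, ht, hd⟩ := hκ.exists_circle_apply_eq_and_deriv_eq hc ζ
  have hp' : (derivNorm (κ c) : ℂ) ≠ 0 := by exact_mod_cast hp
  rw [quad_apply _ _ _ (circle_coe_mem_closedBall ζ), hd, ht]
  field_simp [ζ.coe_ne_zero]
  ring

theorem mem_range_const_or_mem_span (hκ : IsAligned κ) (c : ℂ) :
    κ c ∈ LinearMap.range const.toLinearMap ∨
      κ c ∈ (Submodule.span ℂ {quad 0 1 0}).restrictScalars ℝ := by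
  obtain ⟨u, hu⟩ := exists_circle_norm_smul_eq c
  rw [hu, ← real_smul, map_smul]
  refine (hκ.eq_const_or_eq_linear (Circle.norm_coe u)).imp ?_ ?_
  · rintro ⟨a, ha⟩
    exact Submodule.smul_mem _ _ ⟨a, ha.symm⟩
  · rintro ⟨b, hb⟩
    exact Submodule.smul_mem _ _ (Submodule.mem_span_singleton.2 ⟨b, by rw [hb, smul_quad]; simp⟩)

theorem forall_eq_const (hκ : IsAligned κ) (c : ℂ) : ∃ a, κ c = const a := by
  have hunion : (LinearMap.range κ.toLinearMap : Set SInf) ⊆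
      LinearMap.range const.toLinearMap ∪ (Submodule.span ℂ {quad 0 1 0}).restrictScalars ℝ := by
    rintro _ ⟨c, rfl⟩
    exact hκ.mem_range_const_or_mem_span c
  rcases AddSubgroupClass.subset_union.1 hunion with hconst | hlin
  · obtain ⟨a, ha⟩ := hconst ⟨c, rfl⟩
    exact ⟨a, ha.symm⟩
  · obtain ⟨d, hd, hadd⟩ := hκ (quad 1 1 I)
    obtain ⟨b, hb⟩ := Submodule.mem_span_singleton.1 (hlin ⟨d, rfl⟩)
    have hb' : κ d = quad 0 b 0 := by rw [quad_linear_eq_smul, hb]; rfl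
    rw [hb'] at hadd
    refine absurd hadd (norm_linear_add_quad_ne ?_)
    rintro rfl
    exact apply_ne_zero_of_norm_eq_one κ hd (hb'.trans (by rw [quad_linear_eq_smul, zero_smul]))

end IsAligned

section Supremum

variable {X : Type*} [TopologicalSpace X] [CompactSpace X] {f g : X → ℝ}

theorem exists_apply_eq_iSup [Nonempty X] (hf : Continuous f) : ∃ x, f x = ⨆ y, f y := by
  obtain ⟨x, -, hx⟩ := isCompact_univ.exists_isMaxOn univ_nonempty hf.continuousOn
  exact ⟨x, (le_ciSup (isCompact_range hf).bddAbove x).antisymm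
    (ciSup_le fun y => hx (mem_univ y))⟩

theorem exists_lt_iSup_forall_le (hf : Continuous f) {s : Set X} (hs : IsClosed s)
    (h : ∀ x ∈ s, f x ≠ ⨆ y, f y) : ∃ m < ⨆ y, f y, ∀ x ∈ s, f x ≤ m := by
  rcases s.eq_empty_or_nonempty with rfl | hne
  · exact ⟨(⨆ y, f y) - 1, sub_one_lt _, by simp⟩
  · obtain ⟨x, hxs, hx⟩ := hs.isCompact.exists_isMaxOn hne hf.continuousOn
    exact ⟨f x, (le_ciSup (isCompact_range hf).bddAbove x).lt_of_ne (h x hxs), fun y hy => hx hy⟩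

theorem tendsto_iSup_mul_add_sub [Nonempty X] (hf : Continuous f) (hg : Continuous g) {β : ℝ}
    (h : ∀ x, f x = ⨆ y, f y → g x = β) :
    Tendsto (fun r => (⨆ x, (r * f x + g x)) - r * ⨆ x, f x) atTop (𝓝 β) := by
  have hfle : ∀ x, f x ≤ ⨆ y, f y := le_ciSup (isCompact_range hf).bddAbove
  have hgle : ∀ x, g x ≤ ⨆ y, g y := le_ciSup (isCompact_range hg).bddAbove
  have hlow (r : ℝ) : β ≤ (⨆ x, (r * f x + g x)) - r * ⨆ x, f x := by
    obtain ⟨x, hx⟩ := exists_apply_eq_iSup hf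
    have hle := le_ciSup (isCompact_range (f := fun x => r * f x + g x) (by fun_prop)).bddAbove x
    rw [← h x hx, ← hx]
    linarith
  refine tendsto_order.2 ⟨fun b hb => .of_forall fun r => hb.trans_le (hlow r), fun b hb => ?_⟩
  obtain ⟨c, hβc, hcb⟩ := exists_between hb
  obtain ⟨m, hm, hle⟩ := exists_lt_iSup_forall_le hf (isClosed_le continuous_const hg)
    (s := {x | c ≤ g x}) fun x hx heq => hβc.not_ge ((h x heq) ▸ hx)
  filter_upwards [eventually_ge_atTop 0,
    eventually_ge_atTop (((⨆ x, g x) - c) / ((⨆ x, f x) - m))] with r hr0 hr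
  rw [div_le_iff₀ (sub_pos.2 hm)] at hr
  refine (sub_le_iff_le_add.2 (ciSup_le fun x => ?_)).trans_lt hcb
  rcases le_total c (g x) with hx | hx
  · nlinarith [hle x hx, hgle x]
  · nlinarith [hfle x]

end Supremum

section RealPart

theorem re_le_of_forall_mem_frontier_re_le {J : ℂ → ℂ} {s : Set ℂ} (hs : Bornology.IsBounded s)
    (hJ : DiffContOnCl ℂ J s) {C : ℝ} (h : ∀ x ∈ frontier s, (J x).re ≤ C) {z : ℂ}
    (hz : z ∈ closure s) : (J z).re ≤ C := by
  have hexp : DiffContOnCl ℂ (fun z => exp (J z)) s :=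
    (differentiable_exp.diffContOnCl (s := univ)).comp hJ fun _ _ => mem_univ _
  have hle := norm_le_of_forall_mem_frontier_norm_le hs hexp (C := Real.exp C)
    (fun x hx => by rw [norm_exp]; exact Real.exp_le_exp.2 (h x hx)) hz
  rwa [norm_exp, Real.exp_le_exp] at hle

theorem exists_eqOn_closure_of_re_eq_on_frontier {J : ℂ → ℂ} {s : Set ℂ}
    (hs : Bornology.IsBounded s) (hso : IsOpen s) (hsc : IsConnected s) (hJ : DiffContOnCl ℂ J s)
    {D : ℝ} (h : ∀ x ∈ frontier s, (J x).re = D) : ∃ c, EqOn J (fun _ => c) (closure s) := by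
  have hre (z : ℂ) (hz : z ∈ s) : (J z).re = D := by
    refine le_antisymm (re_le_of_forall_mem_frontier_re_le hs hJ (fun x hx => (h x hx).le)
      (subset_closure hz)) (neg_le_neg_iff.1 ?_)
    exact re_le_of_forall_mem_frontier_re_le hs hJ.neg (fun x hx => by simp [h x hx])
      (subset_closure hz)
  obtain ⟨c, hc⟩ := (hJ.differentiableOn.analyticOnNhd hso).eq_const_of_re_eq_const hre hso hsc
  exact ⟨c, EqOn.of_subset_closure hc hJ.continuousOn continuousOn_const subset_closure le_rfl⟩

theorem norm_add_ofReal_le (w : ℂ) {r : ℝ} (hr : 0 < r) :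
    ‖w + r‖ ≤ r + w.re + ‖w‖ ^ 2 / (2 * r) := by
  have hsq : ‖w + r‖ ^ 2 = ‖w‖ ^ 2 + 2 * r * w.re + r ^ 2 := by
    simp only [← normSq_eq_norm_sq, normSq_apply, add_re, add_im, ofReal_re, ofReal_im]
    ring
  rw [← sub_nonneg]
  have hid : r + w.re + ‖w‖ ^ 2 / (2 * r) - ‖w + r‖ = (‖w + r‖ - r) ^ 2 / (2 * r) := by
    field_simp
    linear_combination -hsq
  rw [hid]
  positivity

end RealPart

namespace SInf

variable {f g φ : SInf} {ρ : ℝ} {U : SInf ≃ₗᵢ[ℝ] SInf}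

theorem continuous_apply_circle (f : SInf) : Continuous fun x : Circle => f x :=
  f.continuousOn.comp_continuous continuous_subtype_val circle_coe_mem_closedBall

theorem continuous_re_apply_circle (f : SInf) : Continuous fun x : Circle => (f x).re :=
  continuous_re.comp f.continuous_apply_circle

/-- The supremum of the real part of `f`. By the maximum principle it may be taken over the unit
circle. -/
noncomputable def reSup (f : SInf) : ℝ := ⨆ x : Circle, (f x).re

theorem re_apply_le_reSup (f : SInf) {z : ℂ} (hz : z ∈ closedBall (0 : ℂ) 1) :
    (f z).re ≤ reSup f := by
  rw [← closure_unitBall] at hz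
  refine re_le_of_forall_mem_frontier_re_le isBounded_ball f.diffContOnCl (fun x hx => ?_) hz
  rw [frontier_ball _ one_ne_zero] at hx
  exact le_ciSup (isCompact_range f.continuous_re_apply_circle).bddAbove (⟨x, hx⟩ : Circle)

theorem reSup_le {M : ℝ} (h : ∀ x : Circle, (f x).re ≤ M) : reSup f ≤ M := ciSup_le h

theorem exists_re_apply_eq_reSup (f : SInf) : ∃ x : Circle, (f x).re = reSup f :=
  exists_apply_eq_iSup f.continuous_re_apply_circle

theorem tendsto_norm_add_const_sub (f : SInf) :
    Tendsto (fun r : ℝ => ‖f + const r‖ - r) atTop (𝓝 (reSup f + derivNorm f)) := by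
  have hlow (r : ℝ) : reSup f + derivNorm f ≤ ‖f + const r‖ - r := by
    obtain ⟨x, hx⟩ := exists_re_apply_eq_reSup f
    have hxb := circle_coe_mem_closedBall x
    have hle := (re_le_norm _).trans (norm_apply_le_supNorm (f + const r) hxb)
    rw [add_apply, const_apply _ hxb, add_re, ofReal_re, hx] at hle
    rw [norm_def, derivNorm_add_const]
    linarith
  have hup (r : ℝ) (hr : 0 < r) :
      ‖f + const r‖ - r ≤ reSup f + derivNorm f + supNorm f ^ 2 / 2 / r := by
    have hsup : supNorm (f + const r) ≤ r + reSup f + supNorm f ^ 2 / 2 / r := by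
      refine supNorm_le fun z hz => ?_
      have hz' := ball_subset_closedBall hz
      rw [add_apply, const_apply _ hz', div_div]
      refine (norm_add_ofReal_le (f z) hr).trans ?_
      gcongr
      exacts [re_apply_le_reSup f hz', norm_apply_le_supNorm f hz']
    rw [norm_def, derivNorm_add_const]
    linarith
  refine tendsto_of_tendsto_of_tendsto_of_le_of_le' tendsto_const_nhds ?_ (.of_forall hlow)
    ((eventually_gt_atTop 0).mono hup)
  simpa using (tendsto_const_nhds.div_atTop tendsto_id).const_add (reSup f + derivNorm f)

theorem norm_add_circle_smul_const (f : SInf) (u : Circle) (c : ℂ) :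
    ‖f + const (u * c)‖ = ‖u⁻¹ • f + const c‖ := by
  rw [← Circle.norm_smul u⁻¹]
  congr 2
  simp [const_eq_quad, circle_smul_quad]

theorem reSup_map_add_derivNorm_map (hU : ∀ c, U (const c) = const c) (f : SInf) (u : Circle) :
    reSup (u⁻¹ • U f) + derivNorm (U f) = reSup (u⁻¹ • f) + derivNorm f := by
  rw [← seminorm_circle_smul derivNorm u⁻¹ (U f), ← seminorm_circle_smul derivNorm u⁻¹ f]
  refine tendsto_nhds_unique ((tendsto_norm_add_const_sub _).congr fun r => ?_)
    (tendsto_norm_add_const_sub _)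
  rw [← norm_add_circle_smul_const, ← norm_add_circle_smul_const, ← U.norm_map (f + _), map_add, hU]

theorem tendsto_reSup_sub {β : ℝ} (h : ∀ x : Circle, (f x).re = reSup f → (g x).re = β) :
    Tendsto (fun r : ℝ => reSup (r • f + g) - r * reSup f) atTop (𝓝 β) := by
  convert tendsto_iSup_mul_add_sub f.continuous_re_apply_circle g.continuous_re_apply_circle h
    using 2 with r
  simp [reSup]

/-- The closed convex hull of the range of `φ` is the disc of radius `ρ` about `0`, expressed
through the supporting lines. -/
def HasDiscHull (φ : SInf) (ρ : ℝ) : Prop := ∀ u : Circle, reSup (u⁻¹ • φ) = ρ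

namespace HasDiscHull

theorem norm_apply_le (h : HasDiscHull φ ρ) (x : Circle) : ‖φ x‖ ≤ ρ := by
  obtain ⟨u, hu⟩ := exists_circle_norm_smul_eq (φ x)
  have hle := re_apply_le_reSup (u⁻¹ • φ) (circle_coe_mem_closedBall x)
  rw [h u, circle_smul_apply, hu, mul_left_comm, ← Circle.coe_mul, inv_mul_cancel] at hle
  simpa using hle

theorem apply_eq_of_re_eq_reSup (h : HasDiscHull φ ρ) {u x : Circle}
    (hx : ((u⁻¹ • φ) x).re = reSup (u⁻¹ • φ)) : φ x = ρ * u :=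
  eq_mul_of_le_re (h.norm_apply_le x) ((h u).symm.trans hx.symm).le

theorem exists_apply_eq (h : HasDiscHull φ ρ) (u : Circle) : ∃ x : Circle, φ x = ρ * u :=
  (exists_re_apply_eq_reSup (u⁻¹ • φ)).imp fun _ hx => h.apply_eq_of_re_eq_reSup hx

theorem pos (h : HasDiscHull φ ρ) (hφ : φ ≠ 0) : 0 < ρ := by
  have hnonneg : 0 ≤ ρ := (norm_nonneg _).trans (h.norm_apply_le 1)
  refine hnonneg.lt_of_ne fun hρ => hφ (ext_circle fun x => ?_)
  exact norm_le_zero_iff.1 (hρ ▸ h.norm_apply_le x)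

theorem of_forall_exists (hle : ∀ x : Circle, ‖φ x‖ ≤ ρ)
    (hex : ∀ u : Circle, ∃ x : Circle, φ x = ρ * u) : HasDiscHull φ ρ := fun u => by
  refine le_antisymm (reSup_le fun x => ?_) ?_
  · refine (re_le_norm _).trans ?_
    rw [circle_smul_apply, norm_mul, Circle.norm_coe, one_mul]
    exact hle x
  · obtain ⟨x, hx⟩ := hex u
    have hle := re_apply_le_reSup (u⁻¹ • φ) (circle_coe_mem_closedBall x)
    rw [circle_smul_apply, hx, mul_left_comm, ← Circle.coe_mul, inv_mul_cancel] at hle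
    simpa using hle

theorem map (hU : ∀ c, U (const c) = const c) (h : HasDiscHull φ ρ) :
    HasDiscHull (U φ) (ρ + derivNorm φ - derivNorm (U φ)) := fun u => by
  linarith [h u, reSup_map_add_derivNorm_map hU φ u]

end HasDiscHull

theorem hasDiscHull_id : HasDiscHull (quad 0 1 0) 1 :=
  .of_forall_exists (fun x => by simp [quad_linear_apply, Circle.norm_coe])
    fun u => ⟨u, by simp [quad_linear_apply]⟩

end SInf

theorem coeff_eq_zero_of_infinite {R : Type*} [CommRing R] [IsDomain R] {s : Set R}
    (hs : s.Infinite) {c₀ c₁ c₂ c₃ c₄ : R}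
    (h : ∀ x ∈ s, c₀ + c₁ * x + c₂ * x ^ 2 + c₃ * x ^ 3 + c₄ * x ^ 4 = 0) : c₀ = 0 ∧ c₁ = 0 := by
  let P : Polynomial R := .C c₀ + .C c₁ * .X + .C c₂ * .X ^ 2 + .C c₃ * .X ^ 3 + .C c₄ * .X ^ 4
  have hP : P = 0 := Polynomial.eq_zero_of_infinite_isRoot P (hs.mono fun x hx => by
    simpa [P, Polynomial.IsRoot] using h x hx)
  constructor
  · simpa [P] using congrArg (Polynomial.coeff · 0) hP
  · simpa [P, Polynomial.coeff_X_pow, Polynomial.coeff_C] using congrArg (Polynomial.coeff · 1) hP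

namespace SInf

variable {f g φ : SInf} {ρ : ℝ} {U : SInf ≃ₗᵢ[ℝ] SInf}

/- On the circle `conj x * (a + b x - conj a * x²)` has real part `re b`, since
`conj x * a - conj a * x` is purely imaginary. -/
theorem exists_eq_quad_of_re_eq {D : ℝ}
    (h : ∀ x : Circle, ((x⁻¹ : Circle) * f x : ℂ).re = D) :
    ∃ a b, f = quad a b (-conj a) := by
  have hJ : DiffContOnCl ℂ (fun z => conj (f 0) * z + dslope f 0 z) (ball 0 1) := by
    refine .add (Differentiable.diffContOnCl (by fun_prop)) ⟨?_, ?_⟩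
    · exact (differentiableOn_dslope (ball_mem_nhds _ one_pos)).2 f.memSInf.1
    · rw [closure_unitBall]
      exact (continuousOn_dslope (closedBall_mem_nhds _ one_pos)).2
        ⟨f.continuousOn, f.differentiableAt (mem_ball_self one_pos)⟩
  have hslope (z : ℂ) : z * dslope f 0 z = f z - f 0 := by simpa using sub_smul_dslope f 0 z
  have hre (x : ℂ) (hx : x ∈ frontier (ball (0 : ℂ) 1)) :
      (conj (f 0) * x + dslope f 0 x).re = D := by
    rw [frontier_ball _ one_ne_zero] at hx
    have hx1 : conj x * x = 1 := conj_mul_circle ⟨x, hx⟩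
    have hdslope : dslope f 0 x = conj x * f x - conj x * f 0 := by
      linear_combination conj x * hslope x - dslope f 0 x * hx1
    have hD : (conj x * f x).re = D := Circle.coe_inv_eq_conj ⟨x, hx⟩ ▸ h ⟨x, hx⟩
    rw [← hD, hdslope]
    simp only [add_re, sub_re, mul_re, conj_re, conj_im]
    ring
  obtain ⟨b, hb⟩ := exists_eqOn_closure_of_re_eq_on_frontier isBounded_ball isOpen_ball
    ((convex_ball _ _).isConnected (nonempty_ball.2 one_pos)) hJ hre
  rw [closure_unitBall] at hb
  refine ⟨f 0, b, ext_closedBall fun z hz => ?_⟩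
  rw [quad_apply _ _ _ hz]
  linear_combination -hslope z + z * hb hz

theorem circle_smul_real_smul_add (u : Circle) (r : ℝ) (f g : SInf) :
    u • (r • f + g) = r • u • f + u • g := by
  rw [smul_add, smul_comm]

/- Compare the norms of `r z + g` and of its image as `r → ∞`, after adding large constants in the
direction `u`. The derivative norms do not depend on `u`, so neither does the difference of the
directional derivatives of `reSup`. -/
theorem exists_re_sub_eq (hU : ∀ c, U (const c) = const c) (hφ : U (quad 0 1 0) = φ)
    (hρ : HasDiscHull φ ρ) (h : ∀ u x : Circle, φ x = ρ * u → U g x = f u) :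
    ∃ D, ∀ u : Circle, ((u⁻¹ : Circle) * (f - g) u : ℂ).re = D := by
  have hlim (u : Circle) : Tendsto (fun r : ℝ =>
      derivNorm (r • quad 0 1 0 + g) - derivNorm (r • φ + U g) - r * ρ + r) atTop
      (𝓝 ((u⁻¹ : Circle) * (f - g) u : ℂ).re) := by
    have hUg := tendsto_reSup_sub (f := u⁻¹ • φ) (g := u⁻¹ • U g)
      (β := ((u⁻¹ : Circle) * f u : ℂ).re) fun x hx => by
        rw [circle_smul_apply, h u x (hρ.apply_eq_of_re_eq_reSup hx)]
    have hg := tendsto_reSup_sub (f := u⁻¹ • quad 0 1 0) (g := u⁻¹ • g)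
      (β := ((u⁻¹ : Circle) * g u : ℂ).re) fun x hx => by
        have hxu : (x : ℂ) = u := by
          simpa [quad_linear_one_apply] using hasDiscHull_id.apply_eq_of_re_eq_reSup hx
        rw [circle_smul_apply, hxu]
    rw [sub_apply, mul_sub, sub_re]
    refine (hUg.sub hg).congr fun r => ?_
    have hfund := reSup_map_add_derivNorm_map hU (r • quad 0 1 0 + g) u
    rw [map_add, map_smul, hφ, circle_smul_real_smul_add, circle_smul_real_smul_add] at hfund
    rw [hρ u, hasDiscHull_id u]
    linarith
  exact ⟨_, fun u => tendsto_nhds_unique (hlim u) (hlim 1)⟩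

theorem exists_eq_add_quad (hU : ∀ c, U (const c) = const c) (hφ : U (quad 0 1 0) = φ)
    (hρ : HasDiscHull φ ρ) (h : ∀ u x : Circle, φ x = ρ * u → U g x = f u) :
    ∃ a b, f = g + quad a b (-conj a) := by
  obtain ⟨D, hD⟩ := exists_re_sub_eq hU hφ hρ h
  obtain ⟨a, b, hab⟩ := exists_eq_quad_of_re_eq hD
  exact ⟨a, b, by rw [← hab, add_sub_cancel]⟩

theorem HasDiscHull.infinite_norm_apply_eq (h : HasDiscHull φ ρ) (hρ : 0 < ρ) :
    {x : Circle | ‖φ x‖ = ρ}.Infinite := by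
  choose x hx using h.exists_apply_eq
  have hinj : Function.Injective x := fun u v huv => by
    have heq := (hx u).symm.trans (huv ▸ hx v)
    exact Circle.coe_injective (mul_left_cancel₀ (ofReal_ne_zero.2 hρ.ne') heq)
  have := circle_infinite
  refine (infinite_range_of_injective hinj).mono ?_
  rintro _ ⟨u, rfl⟩
  simp [hx, Circle.norm_coe, hρ.le]

/- Multiplying `|a + b x + c x²|² = ρ²` by `x²` gives a polynomial in `x` of degree at most `4`. -/
theorem coeff_of_infinite_norm_apply_eq {a b c : ℂ}
    (h : {x : Circle | ‖quad a b c x‖ = ρ}.Infinite) :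
    a * conj c = 0 ∧ a * conj b + b * conj c = 0 := by
  refine coeff_eq_zero_of_infinite (h.image Circle.coe_injective.injOn)
    (c₂ := a * conj a + b * conj b + c * conj c - ρ ^ 2) (c₃ := b * conj a + c * conj b)
    (c₄ := c * conj a) ?_
  rintro _ ⟨x, hx, rfl⟩
  have hsq : conj (quad a b c x) * quad a b c x = ρ ^ 2 := by
    rw [← normSq_eq_conj_mul_self, normSq_eq_norm_sq, hx, ofReal_pow]
  rw [quad_apply _ _ _ (circle_coe_mem_closedBall x)] at hsq
  simp only [map_add, map_mul, map_pow] at hsq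
  linear_combination (x : ℂ) ^ 2 * hsq - (a + b * x + c * (x : ℂ) ^ 2) *
    (conj b * x + conj c * (conj (x : ℂ) * x + 1)) * conj_mul_circle x

theorem HasDiscHull.coeff_eq_zero {a b c : ℂ} (hc : c ≠ 0)
    (h : HasDiscHull (quad a b (c - conj a)) ρ) (hρ : 0 < ρ) : a = 0 ∧ b = 0 := by
  obtain ⟨hac, hab⟩ := coeff_of_infinite_norm_apply_eq (h.infinite_norm_apply_eq hρ)
  have ha : a = 0 := by
    refine (mul_eq_zero.1 hac).resolve_right fun hca => ?_
    rw [hca, mul_zero, add_zero] at hab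
    rw [map_eq_zero] at hca
    have ha0 : a ≠ 0 := fun ha => hc (by simpa [ha] using hca)
    have hb : b = 0 := by simpa [ha0] using hab
    rw [hca, hb] at h
    obtain ⟨x, hx⟩ := h.exists_apply_eq 1
    obtain ⟨y, hy⟩ := h.exists_apply_eq (-1)
    rw [quad_apply _ _ _ (circle_coe_mem_closedBall _)] at hx hy
    have h0 : (ρ : ℂ) = 0 := by
      push_cast at hx hy
      linear_combination (hy - hx) / 2
    exact hρ.ne' (by exact_mod_cast h0)
  subst ha
  exact ⟨rfl, by simpa [hc] using hab⟩

end SInf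

theorem circle_exists_mul_self (u : Circle) : ∃ v, v * v = u := by
  refine ⟨Circle.exp (arg u / 2), ?_⟩
  rw [← Circle.exp_add, add_halves, Circle.exp_arg]

namespace SInf

variable {f g φ : SInf} {ρ : ℝ} {U : SInf ≃ₗᵢ[ℝ] SInf}

instance : Mul SInf where
  mul f g := ⟨fun z => f z * g z, by
    refine ⟨⟨f.memSInf.1.mul g.memSInf.1, derivNorm f * supNorm g + supNorm f * derivNorm g,
      fun z hz => ?_⟩, f.continuousOn.mul g.continuousOn, fun z hz => ?_⟩
    · have hz' := ball_subset_closedBall hz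
      rw [deriv_fun_mul (f.differentiableAt hz) (g.differentiableAt hz)]
      refine norm_add_le_of_le ?_ ?_ <;> rw [norm_mul]
      · exact mul_le_mul (norm_deriv_le_derivNorm f hz) (norm_apply_le_supNorm g hz')
          (norm_nonneg _) (apply_nonneg _ f)
      · exact mul_le_mul (norm_apply_le_supNorm f hz') (norm_deriv_le_derivNorm g hz)
          (norm_nonneg _) (apply_nonneg _ f)
    · exact mul_eq_zero_of_left (f.2.2.2 z hz) _⟩

@[simp] theorem mul_apply (f g : SInf) (z : ℂ) : (f * g) z = f z * g z := rfl

theorem HasDiscHull.mul_self (h : HasDiscHull φ ρ) : HasDiscHull (φ * φ) (ρ ^ 2) := by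
  refine .of_forall_exists (fun x => ?_) fun u => ?_
  · rw [mul_apply, norm_mul, sq]
    exact mul_self_le_mul_self (norm_nonneg _) (h.norm_apply_le x)
  · obtain ⟨v, rfl⟩ := circle_exists_mul_self u
    obtain ⟨x, hx⟩ := h.exists_apply_eq v
    refine ⟨x, ?_⟩
    rw [mul_apply, hx, Circle.coe_mul]
    push_cast
    ring

theorem HasDiscHull.ne_zero (h : HasDiscHull φ ρ) (hρ : 0 < ρ) : φ ≠ 0 := by
  rintro rfl
  obtain ⟨x, hx⟩ := h.exists_apply_eq 1
  rw [Circle.coe_one, mul_one] at hx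
  exact hρ.ne (ofReal_injective hx)

theorem symm_const (hU : ∀ c, U (const c) = const c) (c : ℂ) : U.symm (const c) = const c :=
  U.toEquiv.symm_apply_eq.2 (hU c).symm

theorem hasDiscHull_map_id (hU : ∀ c, U (const c) = const c) :
    HasDiscHull (U (quad 0 1 0)) (2 - derivNorm (U (quad 0 1 0))) := by
  have h := hasDiscHull_id.map hU
  rwa [derivNorm_quad_linear, norm_one, one_add_one_eq_two] at h

/- The preimage of `U(z)²` has a disc as its hull and differs from `ρ² z²` by some polynomial
`a + b z - conj a * z²`, which must therefore vanish. -/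
theorem map_quad_sq (hU : ∀ c, U (const c) = const c) (h : HasDiscHull (U (quad 0 1 0)) ρ) :
    U (quad 0 0 (ρ ^ 2)) = U (quad 0 1 0) * U (quad 0 1 0) := by
  have hρ : 0 < ρ := h.pos (U.map_eq_zero_iff.not.2 quad_linear_one_ne_zero)
  have hρ2 : (ρ ^ 2 : ℂ) ≠ 0 := pow_ne_zero 2 (ofReal_ne_zero.2 hρ.ne')
  obtain ⟨g, hg⟩ := U.surjective (U (quad 0 1 0) * U (quad 0 1 0))
  obtain ⟨a, b, hab⟩ := exists_eq_add_quad (f := quad 0 0 (ρ ^ 2)) (g := g) hU rfl h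
    fun u x hx => by
      rw [hg, mul_apply, hx, quad_apply _ _ _ (circle_coe_mem_closedBall u)]
      ring
  obtain rfl : g = quad (-a) (-b) (ρ ^ 2 - conj (-a)) := by
    rw [eq_sub_of_add_eq hab.symm, quad_sub]
    simp
  have hdisc := h.mul_self.map (symm_const hU)
  rw [← hg, U.symm_apply_apply] at hdisc
  have hne := U.map_eq_zero_iff.not.1 (hg ▸ h.mul_self.ne_zero (by positivity))
  obtain ⟨ha, hb⟩ := hdisc.coeff_eq_zero hρ2 (hdisc.pos hne)
  rw [← hg, ha, hb, map_zero, sub_zero]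

theorem HasDiscHull.le_derivNorm (h : HasDiscHull φ ρ) : ρ ≤ derivNorm φ := by
  obtain ⟨x, hx⟩ := h.exists_apply_eq 1
  obtain ⟨y, hy⟩ := h.exists_apply_eq (-1)
  refine le_of_mul_le_mul_right ?_ two_pos
  calc
    ρ * 2 ≤ ‖φ x - φ y‖ := by
      rw [hx, hy]
      simpa [mul_two] using re_le_norm (ρ * (1 : Circle) - ρ * (-1 : Circle) : ℂ)
    _ ≤ derivNorm φ * ‖(x - y : ℂ)‖ :=
      norm_apply_sub_le φ (circle_coe_mem_closedBall x) (circle_coe_mem_closedBall y)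
    _ ≤ derivNorm φ * 2 := by
      refine mul_le_mul_of_nonneg_left ?_ (apply_nonneg _ φ)
      simpa [Circle.norm_coe, one_add_one_eq_two] using norm_sub_le (x : ℂ) y

theorem HasDiscHull.reSup_smul_add_le (h : HasDiscHull φ ρ) (hρ : 0 < ρ) {ε : ℝ} (hε : 0 ≤ ε) :
    reSup (ε • φ + (ρ ^ 2)⁻¹ • (φ * φ)) ≤ ε * ρ + 1 := reSup_le fun x => by
  refine (re_le_norm _).trans (norm_add_le_of_le ?_ ?_)
  · change ‖(ε : ℂ) * φ x‖ ≤ _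
    rw [norm_mul, norm_real, Real.norm_of_nonneg hε]
    exact mul_le_mul_of_nonneg_left (h.norm_apply_le x) hε
  · change ‖((ρ ^ 2)⁻¹ : ℝ) * (φ x * φ x)‖ ≤ 1
    rw [norm_mul, norm_mul, norm_real, Real.norm_of_nonneg (by positivity),
      inv_mul_le_one₀ (by positivity), ← sq]
    exact pow_le_pow_left₀ (norm_nonneg _) (h.norm_apply_le x) 2

theorem HasDiscHull.one_le_reSup_neg (h : HasDiscHull φ ρ) (hρ : 0 < ρ) (ε : ℝ) :
    1 ≤ reSup (-(ε • φ + (ρ ^ 2)⁻¹ • (φ * φ))) := by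
  obtain ⟨ι, hι⟩ := exists_circle_coe_eq_I
  obtain ⟨x, hx⟩ := h.exists_apply_eq ι
  have hle := re_apply_le_reSup (-(ε • φ + (ρ ^ 2)⁻¹ • (φ * φ))) (circle_coe_mem_closedBall x)
  have hval : (-(ε • φ + (ρ ^ 2)⁻¹ • (φ * φ)) : SInf) x = 1 - (ε * ρ : ℝ) * I := by
    have hρ' : (ρ : ℂ) ≠ 0 := ofReal_ne_zero.2 hρ.ne'
    change -(ε * φ x + ((ρ ^ 2)⁻¹ : ℝ) * (φ x * φ x)) = _
    rw [hx, hι]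
    push_cast
    field_simp
    linear_combination -I_sq
  rw [hval] at hle
  exact (by simp : (1 : ℝ) = (1 - (ε * ρ : ℝ) * I).re).trans_le hle

theorem one_add_le_reSup_quad (ε : ℝ) : 1 + ε ≤ reSup (quad 0 ε 1) := by
  have hle := re_apply_le_reSup (quad 0 ε 1) (circle_coe_mem_closedBall 1)
  rw [quad_apply _ _ _ (circle_coe_mem_closedBall 1)] at hle
  simpa [add_comm] using hle

theorem reSup_neg_quad_le (ε : ℝ) : reSup (-quad 0 ε 1) ≤ 1 + ε ^ 2 / 8 := reSup_le fun x => by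
  have hx := x.normSq_coe
  rw [normSq_apply] at hx
  rw [neg_apply, quad_apply _ _ _ (circle_coe_mem_closedBall x)]
  simp only [neg_re, add_re, zero_re, one_mul, sq, mul_re, ofReal_re, ofReal_im]
  nlinarith [sq_nonneg ((x : ℂ).re + ε / 4)]

/- If `ρ < 1`, the functions `ε z + z²` with `ε = 1 - ρ` and its image `ε φ + φ² / ρ²` violate the
norm identity in the directions `1` and `-1`. -/
theorem one_le_of_hasDiscHull_map_id (hU : ∀ c, U (const c) = const c)
    (h : HasDiscHull (U (quad 0 1 0)) ρ) : 1 ≤ ρ := by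
  by_contra! hlt
  have hρ : 0 < ρ := h.pos (U.map_eq_zero_iff.not.2 quad_linear_one_ne_zero)
  have hmap : U (quad 0 (1 - ρ : ℝ) 1) = (1 - ρ) • U (quad 0 1 0) +
      (ρ ^ 2)⁻¹ • (U (quad 0 1 0) * U (quad 0 1 0)) := by
    rw [← map_quad_sq hU h, ← map_smul, ← map_smul, ← map_add, real_smul_quad, real_smul_quad,
      quad_add]
    have hρ' : (ρ : ℂ) ≠ 0 := ofReal_ne_zero.2 hρ.ne'
    congr 2 <;> push_cast <;> field_simp <;> ring
  have hone := reSup_map_add_derivNorm_map hU (quad 0 (1 - ρ : ℝ) 1) 1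
  have hneg := reSup_map_add_derivNorm_map hU (-quad 0 (1 - ρ : ℝ) 1) 1
  simp only [inv_one, one_smul, map_neg, map_neg_eq_map] at hone hneg
  have hup := h.reSup_smul_add_le hρ (sub_nonneg.2 hlt.le)
  have hlow := h.one_le_reSup_neg hρ (1 - ρ)
  rw [← hmap] at hup hlow
  nlinarith [one_add_le_reSup_quad (1 - ρ), reSup_neg_quad_le (1 - ρ)]

theorem HasDiscHull.apply_zero (h : HasDiscHull φ 1) (hφ : derivNorm φ = 1) : φ 0 = 0 := by
  have hdist (x : Circle) : ‖φ x - φ 0‖ ≤ 1 := by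
    simpa [hφ, Circle.norm_coe] using
      norm_apply_sub_le φ (circle_coe_mem_closedBall x) (mem_closedBall_self zero_le_one)
  obtain ⟨x, hx⟩ := h.exists_apply_eq 1
  obtain ⟨y, hy⟩ := h.exists_apply_eq (-1)
  have hx' : ‖1 - φ 0‖ ≤ 1 := by simpa [hx] using hdist x
  have hy' : ‖1 + φ 0‖ ≤ 1 := by
    have hle := hdist y
    rw [hy, ← norm_neg] at hle
    simpa [add_comm] using hle
  have heq := smul_eq_smul_of_add_le_norm_add hx' hy' (by norm_num)
  rw [one_smul, one_smul] at heq
  linear_combination heq / 2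

theorem HasDiscHull.exists_eq_linear (h : HasDiscHull φ 1) (hφ : derivNorm φ = 1) :
    ∃ lam : Circle, φ = quad 0 lam 0 := by
  have h0 := h.apply_zero hφ
  obtain ⟨x, hx⟩ := h.exists_apply_eq 1
  have hlip {z w : ℂ} (hz : z ∈ closedBall (0 : ℂ) 1) (hw : w ∈ closedBall (0 : ℂ) 1) :
      ‖φ z - φ w‖ ≤ ‖z - w‖ := by simpa [hφ] using norm_apply_sub_le φ hz hw
  have hzero : (0 : ℂ) ∈ closedBall (0 : ℂ) 1 := mem_closedBall_self zero_le_one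
  have hnorm : ‖(x / 2 : ℂ)‖ = 1 / 2 := by simp [Circle.norm_coe]
  have hball : (x / 2 : ℂ) ∈ ball (0 : ℂ) 1 := by rw [mem_ball_zero_iff, hnorm]; norm_num
  have hhalf : ‖φ (x / 2)‖ = 1 / 2 := by
    refine le_antisymm ?_ ?_
    · simpa [h0, Circle.norm_coe] using hlip (ball_subset_closedBall hball) hzero
    · have hle := hlip (circle_coe_mem_closedBall x) (ball_subset_closedBall hball)
      rw [hx, sub_half, hnorm] at hle
      have htri := norm_sub_norm_le ((1 : ℝ) * (1 : Circle) : ℂ) (φ (x / 2))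
      simp only [ofReal_one, Circle.coe_one, mul_one, norm_one] at hle htri
      linarith
  have hslope : ‖dslope φ 0 (x / 2)‖ = 1 := by
    rw [dslope_of_ne _ (norm_pos_iff.1 (by rw [hnorm]; norm_num)), slope_def_field, h0, sub_zero,
      sub_zero, norm_div, hhalf, hnorm, div_self (by norm_num)]
  have haffine := affine_of_mapsTo_ball_of_norm_dslope_eq_div (R₂ := 1) φ.memSInf.1
    (fun z hz => mem_closedBall_iff_norm.2 <| (hlip (ball_subset_closedBall hz) hzero).trans <|
      by simpa using (mem_ball_zero_iff.1 hz).le) hball (by rw [hslope, div_one])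
  refine ⟨⟨_, mem_sphere_zero_iff_norm.2 hslope⟩, ext_ball fun z hz => ?_⟩
  rw [haffine hz, quad_apply _ _ _ (ball_subset_closedBall hz), h0]
  simp [mul_comm]

theorem exists_map_quad_eq (hU : ∀ c, U (const c) = const c) :
    ∃ lam : Circle, U (quad 0 1 0) = quad 0 lam 0 ∧ U (quad 0 0 1) = quad 0 0 (lam ^ 2) := by
  have h := hasDiscHull_map_id hU
  have hone : derivNorm (U (quad 0 1 0)) = 1 := by
    linarith [h.le_derivNorm, one_le_of_hasDiscHull_map_id hU h]
  rw [show 2 - derivNorm (U (quad 0 1 0)) = 1 by linarith] at h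
  obtain ⟨lam, hlam⟩ := h.exists_eq_linear hone
  refine ⟨lam, hlam, ?_⟩
  have hsq := map_quad_sq hU h
  rw [ofReal_one, one_pow] at hsq
  rw [hsq, hlam]
  refine ext_circle fun x => ?_
  rw [mul_apply, quad_linear_apply, quad_apply _ _ _ (circle_coe_mem_closedBall x)]
  ring

end SInf

theorem apply_eq_self_of_apply_sub_eq {E : Type*} [NormedAddCommGroup E] [NormedSpace ℝ E]
    (U : E →ₗᵢ[ℝ] E) {g : E} (h : U (U g - g) = U g - g) : U g = g := by
  have horbit (n : ℕ) : ‖g + n • (U g - g)‖ = ‖g‖ := by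
    induction n with
    | zero => simp
    | succ n ih =>
      rw [← ih, ← U.norm_map (g + n • (U g - g)), map_add, map_nsmul, h, succ_nsmul']
      congr 1
      abel
  have hbound (n : ℕ) : n * ‖U g - g‖ ≤ ‖g‖ + ‖g‖ := by
    calc
      n * ‖U g - g‖ = ‖n • (U g - g)‖ := by
        rw [← Nat.cast_smul_eq_nsmul ℝ, norm_smul, Real.norm_natCast]
      _ = ‖g + n • (U g - g) - g‖ := by rw [add_sub_cancel_left]
      _ ≤ ‖g‖ + ‖g‖ := by simpa [horbit n] using norm_sub_le (g + n • (U g - g)) g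
  by_contra hne
  obtain ⟨n, hn⟩ := exists_nat_gt ((‖g‖ + ‖g‖) / ‖U g - g‖)
  rw [div_lt_iff₀ (norm_sub_pos_iff.2 hne)] at hn
  exact hn.not_ge (hbound n)

/-- The map `f ↦ τ ∘ f ∘ σ` preserves complex differentiability and the modulus of the derivative,
so that it acts isometrically on `𝒮^∞`. -/
def PreservesNormDeriv (σ τ : ℂ ≃ₗᵢ[ℝ] ℂ) : Prop :=
  ∀ ⦃f : ℂ → ℂ⦄ ⦃f' z : ℂ⦄, HasDerivAt f f' (σ z) →
    ∃ g', ‖g'‖ = ‖f'‖ ∧ HasDerivAt (τ ∘ f ∘ σ) g' z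

theorem PreservesNormDeriv.differentiableAt {σ τ : ℂ ≃ₗᵢ[ℝ] ℂ}
    (h : PreservesNormDeriv σ τ) {f : ℂ → ℂ} {z : ℂ}
    (hf : DifferentiableAt ℂ f (σ z)) :
    DifferentiableAt ℂ (τ ∘ f ∘ σ) z ∧ ‖deriv (τ ∘ f ∘ σ) z‖ = ‖deriv f (σ z)‖ := by
  obtain ⟨g', hg', hg⟩ := h hf.hasDerivAt
  exact ⟨hg.differentiableAt, by rw [hg.deriv, hg']⟩

theorem preservesNormDeriv_rotation (a b : Circle) :
    PreservesNormDeriv (rotation a) (rotation b) := fun f f' z hf => by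
  refine ⟨b * (f' * a), by simp [Circle.norm_coe], ?_⟩
  have hlin : HasDerivAt (rotation a) a z := (hasDerivAt_const_mul (a : ℂ) :)
  exact (hf.comp z hlin).const_mul (b : ℂ)

theorem preservesNormDeriv_conj : PreservesNormDeriv conjLIE conjLIE := fun f f' z hf =>
  ⟨conj f', RCLike.norm_conj f', hasDerivAt_conj_conj_iff.2 (by simpa using hf)⟩

namespace SInf

variable {σ τ : ℂ ≃ₗᵢ[ℝ] ℂ}

/-- The isometric embedding `f ↦ τ ∘ f ∘ σ` of `𝒮^∞`. -/
noncomputable def compIsometry (h : PreservesNormDeriv σ τ) : SInf →ₗᵢ[ℝ] SInf where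
  toFun f := ⟨τ ∘ f ∘ σ, by
    have hσ {z : ℂ} (hz : z ∈ ball (0 : ℂ) 1) : σ z ∈ ball (0 : ℂ) 1 := by simpa using hz
    refine ⟨⟨fun z hz => (h.differentiableAt (f.differentiableAt (hσ hz))).1.differentiableWithinAt,
      derivNorm f, fun z hz => ?_⟩, ?_, fun z hz => ?_⟩
    · rw [(h.differentiableAt (f.differentiableAt (hσ hz))).2]
      exact norm_deriv_le_derivNorm f (hσ hz)
    · exact τ.continuous.comp_continuousOn
        (f.continuousOn.comp σ.continuous.continuousOn fun z hz => by simpa using hz)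
    · have hz' : f (σ z) = 0 := f.2.2.2 _ (by simpa using hz)
      simp [hz']⟩
  map_add' f g := DFunLike.ext _ _ fun z => τ.map_add (f (σ z)) (g (σ z))
  map_smul' r f := DFunLike.ext _ _ fun z =>
    (τ.map_smul r (f (σ z))).trans (real_smul (x := r) (z := τ (f (σ z))))
  norm_map' f := by
    let e : ball (0 : ℂ) 1 ≃ ball (0 : ℂ) 1 := σ.toEquiv.subtypeEquiv fun z => by simp
    refine congrArg₂ (· + ·) ?_ ?_
    · exact e.iSup_congr fun z => (τ.norm_map _).symm
    · exact e.iSup_congr fun z => (h.differentiableAt (f.differentiableAt (e z).2)).2.symm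

theorem compIsometry_apply (h : PreservesNormDeriv σ τ) (f : SInf) (z : ℂ) :
    compIsometry h f z = τ (f (σ z)) := rfl

/-- The isometry `f ↦ τ ∘ f ∘ σ` of `𝒮^∞`. -/
noncomputable def compEquiv (h : PreservesNormDeriv σ τ)
    (h' : PreservesNormDeriv σ.symm τ.symm) : SInf ≃ₗᵢ[ℝ] SInf :=
  .ofSurjective (compIsometry h) fun f => ⟨compIsometry h' f, DFunLike.ext _ _ fun z => by
    simp [compIsometry_apply]⟩

/-- The isometry `f ↦ b f(a z)` of `𝒮^∞`. -/
noncomputable def rotate (a b : Circle) : SInf ≃ₗᵢ[ℝ] SInf :=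
  compEquiv (preservesNormDeriv_rotation a b) (by
    simpa only [rotation_symm] using preservesNormDeriv_rotation a⁻¹ b⁻¹)

theorem rotate_apply (a b : Circle) (f : SInf) (z : ℂ) : rotate a b f z = b * f (a * z) := rfl

theorem rotate_quad (a b : Circle) (c₀ c₁ c₂ : ℂ) :
    rotate a b (quad c₀ c₁ c₂) = quad (b * c₀) (b * a * c₁) (b * a ^ 2 * c₂) :=
  ext_closedBall fun z hz => by
    rw [rotate_apply, quad_apply _ _ _ hz, quad_apply _ _ _ (by simpa [Circle.norm_coe] using hz)]
    ring

theorem rotate_const (a b : Circle) (c : ℂ) : rotate a b (const c) = const (b * c) := by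
  simp only [const_eq_quad, rotate_quad, mul_zero]

/-- The isometry `f ↦ conj (f (conj z))` of `𝒮^∞`. -/
noncomputable def conjEquiv : SInf ≃ₗᵢ[ℝ] SInf :=
  compEquiv preservesNormDeriv_conj preservesNormDeriv_conj

theorem conjEquiv_apply (f : SInf) (z : ℂ) : conjEquiv f z = conj (f (conj z)) := rfl

theorem conjEquiv_const (c : ℂ) : conjEquiv (const c) = const (conj c) :=
  ext_closedBall fun z hz => by
    rw [conjEquiv_apply, const_apply _ hz, const_apply _ (by simpa using hz)]

end SInf

theorem circle_coe_eq_one_or_neg_one {μ : Circle} (h : ‖1 + I * μ‖ = ‖1 + I‖) :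
    (μ : ℂ) = 1 ∨ (μ : ℂ) = -1 := by
  have hμ : normSq μ = 1 := μ.normSq_coe
  have hsq : normSq (1 + I * μ) = normSq (1 + I) := by rw [normSq_eq_norm_sq, h, normSq_eq_norm_sq]
  simp only [normSq_apply, add_re, add_im, one_re, one_im, mul_re, mul_im, I_re, I_im] at hμ hsq
  have him : (μ : ℂ).im = 0 := by linarith
  have hre : (μ : ℂ).re = 1 ∨ (μ : ℂ).re = -1 := mul_self_eq_one_iff.1 (by simpa [him] using hμ)
  exact hre.imp (fun hre => Complex.ext hre him)
    fun hre => Complex.ext hre (him.trans (by rw [neg_im, one_im, neg_zero]))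

namespace SInf

variable {g : SInf} {U : SInf ≃ₗᵢ[ℝ] SInf} {a : Circle}

theorem rotate_one_apply (a : Circle) (f : SInf) : rotate 1 a f = a • f :=
  DFunLike.ext _ _ fun z => by simp [rotate_apply]

theorem rotate_rotate (a b a' b' : Circle) (f : SInf) :
    rotate a b (rotate a' b' f) = rotate (a' * a) (b * b') f :=
  DFunLike.ext _ _ fun z => by simp only [rotate_apply, Circle.coe_mul, mul_assoc]

theorem rotate_one_one (f : SInf) : rotate 1 1 f = f :=
  DFunLike.ext _ _ fun z => by simp [rotate_apply]

theorem conjEquiv_conjEquiv (f : SInf) : conjEquiv (conjEquiv f) = f :=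
  DFunLike.ext _ _ fun z => by simp [conjEquiv_apply]

theorem exists_map_circle_smul (hU : ∀ c, U (const c) = const c) (c : Circle) :
    ∃ lam : Circle, U ((c : ℂ) • quad 0 1 0) = (c * lam : ℂ) • quad 0 1 0 ∧
      U ((c : ℂ) • quad 0 0 1) = (c * lam ^ 2 : ℂ) • quad 0 0 1 := by
  let V : SInf ≃ₗᵢ[ℝ] SInf := (rotate 1 c).trans (U.trans (rotate 1 c⁻¹))
  have hV (f : SInf) : U ((c : ℂ) • f) = (c : ℂ) • V f := by
    simp only [V, LinearIsometryEquiv.trans_apply, rotate_one_apply]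
    exact (smul_inv_smul c (U (c • f))).symm
  have hVconst (x : ℂ) : V (const x) = const x := by
    simp only [V, LinearIsometryEquiv.trans_apply, rotate_const, hU, ← mul_assoc, ← Circle.coe_mul,
      inv_mul_cancel, Circle.coe_one, one_mul]
  obtain ⟨lam, h₁, h₂⟩ := exists_map_quad_eq hVconst
  refine ⟨lam, ?_, ?_⟩
  · rw [hV, h₁, smul_quad, smul_quad]
    simp
  · rw [hV, h₂, smul_quad, smul_quad]
    simp

theorem map_complex_smul_eq (h₁ : U g = g) {μ : ℂ} (hI : U (I • g) = (I * μ) • g) (b : ℂ) :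
    U (b • g) = (b.re + b.im * (I * μ) : ℂ) • g := by
  have h : U (b • g) = b.re • U g + b.im • U (I • g) :=
    map_complex_smul U.toLinearIsometry.toLinearMap b g
  rw [h, h₁, hI, add_smul, mul_smul (b.im : ℂ), coe_smul, coe_smul]

/- `U` acts on `ℂ • z` by a real linear isometry fixing `1`, hence by the identity or conjugation;
the latter is incompatible with its action on `ℂ • z²`. -/
theorem map_complex_smul_of_map_quad (hU : ∀ c, U (const c) = const c)
    (h₁ : U (quad 0 1 0) = quad 0 1 0) (h₂ : U (quad 0 0 1) = quad 0 0 1) (b : ℂ) :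
    U (b • quad 0 1 0) = b • quad 0 1 0 ∧ U (b • quad 0 0 1) = b • quad 0 0 1 := by
  have hz : quad 0 1 0 ≠ 0 := quad_linear_one_ne_zero
  have hw : quad 0 0 1 ≠ 0 := quad_square_one_ne_zero
  obtain ⟨ι, hι⟩ := exists_circle_coe_eq_I
  obtain ⟨μ, hμ₁, hμ₂⟩ := exists_map_circle_smul hU ι
  rw [hι] at hμ₁ hμ₂
  have hμ : (μ : ℂ) = 1 ∨ (μ : ℂ) = -1 := by
    have hnorm := U.norm_map ((1 + I) • quad 0 1 0)
    rw [map_complex_smul_eq h₁ hμ₁, norm_smul, norm_smul, mul_left_inj' (norm_ne_zero_iff.2 hz)]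
      at hnorm
    exact circle_coe_eq_one_or_neg_one (by simpa using hnorm)
  have hμsq : (μ : ℂ) ^ 2 = 1 := by rcases hμ with hμ | hμ <;> simp [hμ]
  rw [hμsq] at hμ₂
  have hsq (b : ℂ) : U (b • quad 0 0 1) = b • quad 0 0 1 := by
    rw [map_complex_smul_eq h₂ hμ₂, mul_one, re_add_im]
  refine ⟨?_, hsq b⟩
  rcases hμ with hμ | hμ
  · rw [map_complex_smul_eq h₁ hμ₁, hμ, mul_one, re_add_im]
  obtain ⟨v, hv⟩ := circle_exists_mul_self ι
  obtain ⟨lam, hlam₁, hlam₂⟩ := exists_map_circle_smul hU v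
  rw [hsq] at hlam₂
  rw [map_complex_smul_eq h₁ hμ₁] at hlam₁
  have e₁ := smul_left_injective ℂ hz hlam₁
  have e₂ := smul_left_injective ℂ hw hlam₂
  have hconj : conj (v : ℂ) = v * lam := by
    rw [← e₁]
    apply Complex.ext <;> simp [hμ]
  have hvI : (v : ℂ) * v = I := by rw [← hι, ← hv, Circle.coe_mul]
  have hI : conj I = I := by
    calc
      conj I = (v * lam) * (v * lam) := by rw [← hvI, map_mul, hconj]
      _ = v * (v * lam ^ 2) := by ring
      _ = I := by rw [← e₂, hvI]
  norm_num [Complex.ext_iff] at hI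

theorem map_quad (hU : ∀ c, U (const c) = const c) (h₁ : U (quad 0 1 0) = quad 0 1 0)
    (h₂ : U (quad 0 0 1) = quad 0 0 1) (a b c : ℂ) : U (quad a b c) = quad a b c := by
  have hsplit : quad a b c = const a + b • quad 0 1 0 + c • quad 0 0 1 := by
    simp [const_eq_quad, smul_quad, quad_add]
  rw [hsplit, map_add, map_add, hU, (map_complex_smul_of_map_quad hU h₁ h₂ b).1,
    (map_complex_smul_of_map_quad hU h₁ h₂ c).2]

theorem map_eq_self (hU : ∀ c, U (const c) = const c) (h₁ : U (quad 0 1 0) = quad 0 1 0)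
    (h₂ : U (quad 0 0 1) = quad 0 0 1) (g : SInf) : U g = g := by
  obtain ⟨a, b, hab⟩ := exists_eq_add_quad (f := U g) (g := g) hU h₁ hasDiscHull_id
    fun u x hx => by
      rw [quad_linear_one_apply, ofReal_one, one_mul] at hx
      rw [hx]
  refine apply_eq_self_of_apply_sub_eq U.toLinearIsometry ?_
  change U (U g - g) = U g - g
  rw [hab, add_sub_cancel_left, map_quad hU h₁ h₂]

theorem exists_eq_rotate (hU : ∀ c, U (const c) = const (a * c)) :
    ∃ lam : Circle, U = rotate lam a := by
  have hV (c : ℂ) : U.trans (rotate 1 a⁻¹) (const c) = const c := by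
    simp only [LinearIsometryEquiv.trans_apply, rotate_const, hU, ← mul_assoc, ← Circle.coe_mul,
      inv_mul_cancel, Circle.coe_one, one_mul]
  obtain ⟨lam, h₁, h₂⟩ := exists_map_quad_eq hV
  refine ⟨lam, LinearIsometryEquiv.ext fun f => ?_⟩
  have hW (c : ℂ) : (U.trans (rotate 1 a⁻¹)).trans (rotate lam⁻¹ 1) (const c) = const c := by
    rw [LinearIsometryEquiv.trans_apply, hV, rotate_const, Circle.coe_one, one_mul]
  have hid := map_eq_self hW
    (by
      rw [LinearIsometryEquiv.trans_apply, h₁, rotate_quad]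
      simp)
    (by
      rw [LinearIsometryEquiv.trans_apply, h₂, rotate_quad]
      simp) f
  simp only [LinearIsometryEquiv.trans_apply, rotate_rotate, one_mul] at hid
  rw [← congrArg (rotate lam a) hid, rotate_rotate, inv_mul_cancel, mul_inv_cancel, rotate_one_one]

theorem exists_map_const_eq (U : SInf ≃ₗᵢ[ℝ] SInf) :
    ∃ τ : ℂ ≃ₗᵢ[ℝ] ℂ, ∀ c, U (const c) = const (τ c) := by
  have h0 : (0 : ℂ) ∈ closedBall (0 : ℂ) 1 := mem_closedBall_self zero_le_one
  have hconst (c : ℂ) : U (const c) = const (U (const c) 0) := by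
    obtain ⟨a, ha⟩ := (isAligned_const.comp U).forall_eq_const c
    change U (const c) = const a at ha
    rw [ha, const_apply _ h0]
  let τ : ℂ →ₗᵢ[ℝ] ℂ :=
    { toLinearMap := evalₗ 0 ∘ₗ U.toLinearEquiv.toLinearMap ∘ₗ const.toLinearMap
      norm_map' := fun c => by
        change ‖U (const c) 0‖ = ‖c‖
        rw [← const.norm_map, ← hconst, U.norm_map, const.norm_map] }
  exact ⟨τ.toLinearIsometryEquiv rfl, hconst⟩

theorem exists_eq_rotate_or_eq_conjEquiv_trans_rotate (U : SInf ≃ₗᵢ[ℝ] SInf) :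
    ∃ lam a : Circle, U = rotate lam a ∨ U = conjEquiv.trans (rotate lam a) := by
  obtain ⟨τ, hτ⟩ := exists_map_const_eq U
  obtain ⟨a, rfl | rfl⟩ := linear_isometry_complex τ
  · obtain ⟨lam, hlam⟩ := exists_eq_rotate hτ
    exact ⟨lam, a, .inl hlam⟩
  · obtain ⟨lam, hlam⟩ := exists_eq_rotate (U := conjEquiv.trans U) (a := a) fun c => by
      rw [LinearIsometryEquiv.trans_apply, conjEquiv_const, hτ]
      simp
    refine ⟨lam, a, .inr ?_⟩
    rw [← hlam]
    exact LinearIsometryEquiv.ext fun f => by simp [conjEquiv_conjEquiv]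

end SInf

theorem normSigma_congr {f g : ℂ → ℂ} (h : EqOn f g (ball 0 1)) : normSigma f = normSigma g := by
  refine congrArg₂ (· + ·) (iSup_congr fun z => by rw [h z.2]) (iSup_congr fun z => ?_)
  rw [(h.eventuallyEq_of_mem (isOpen_ball.mem_nhds z.2)).deriv_eq]

theorem normSigma_eq_zero_iff {f : ℂ → ℂ} (hf : MemSInf f) :
    normSigma f = 0 ↔ EqOn f 0 (ball 0 1) := by
  obtain ⟨F, hF⟩ := SInf.exists_eqOn_ball hf
  rw [← normSigma_congr hF, ← SInf.norm_eq_normSigma, norm_eq_zero]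
  refine ⟨?_, fun h => SInf.ext_ball (hF.trans h)⟩
  rintro rfl
  exact hF.symm

section Transfer

variable {T : (ℂ → ℂ) → (ℂ → ℂ)}

theorem eqOn_map_of_eqOn (hmap : ∀ f, MemSInf f → MemSInf (T f))
    (hiso : ∀ f g, MemSInf f → MemSInf g → normSigma (T f - T g) = normSigma (f - g))
    {f g : ℂ → ℂ} (hf : MemSInf f) (hg : MemSInf g) (h : EqOn f g (ball 0 1)) :
    EqOn (T f) (T g) (ball 0 1) := by
  have hzero : normSigma (T f - T g) = 0 := by
    rw [hiso f g hf hg, normSigma_eq_zero_iff (hf.sub hg)]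
    exact fun z hz => sub_eq_zero.2 (h hz)
  exact fun z hz => sub_eq_zero.1
    ((normSigma_eq_zero_iff ((hmap f hf).sub (hmap g hg))).1 hzero hz)

theorem exists_isometryEquiv (hmap : ∀ f, MemSInf f → MemSInf (T f))
    (hsurj : ∀ g, MemSInf g → ∃ f, MemSInf f ∧ EqOn (T f) g (ball (0 : ℂ) 1))
    (hiso : ∀ f g, MemSInf f → MemSInf g → normSigma (T f - T g) = normSigma (f - g)) :
    ∃ E : SInf ≃ᵢ SInf, ∀ F : SInf, EqOn (E F) (T F) (ball 0 1) := by
  choose E hE using fun F : SInf => SInf.exists_eqOn_ball (hmap F F.memSInf)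
  have hisom : Isometry E := Isometry.of_dist_eq fun F G => by
    rw [dist_eq_norm, dist_eq_norm, SInf.norm_eq_normSigma, SInf.norm_eq_normSigma]
    refine Eq.trans (normSigma_congr fun z hz => ?_) (hiso F G F.memSInf G.memSInf)
    exact congrArg₂ (· - ·) (hE F hz) (hE G hz)
  have hsurjE : Function.Surjective E := fun G => by
    obtain ⟨f, hf, hfG⟩ := hsurj G G.memSInf
    obtain ⟨F, hF⟩ := SInf.exists_eqOn_ball hf
    exact ⟨F, SInf.ext_ball
      ((hE F).trans ((eqOn_map_of_eqOn hmap hiso F.memSInf hf hF).trans hfG))⟩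
  exact ⟨⟨.ofBijective E ⟨hisom.injective, hsurjE⟩, hisom⟩, hE⟩

theorem exists_linearIsometryEquiv (hmap : ∀ f, MemSInf f → MemSInf (T f))
    (hsurj : ∀ g, MemSInf g → ∃ f, MemSInf f ∧ EqOn (T f) g (ball (0 : ℂ) 1))
    (hiso : ∀ f g, MemSInf f → MemSInf g → normSigma (T f - T g) = normSigma (f - g)) :
    ∃ U : SInf ≃ₗᵢ[ℝ] SInf, ∀ f, MemSInf f → ∃ F : SInf, EqOn F f (ball 0 1) ∧
      ∀ z ∈ ball (0 : ℂ) 1, T f z = T 0 z + U F z := by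
  obtain ⟨E, hE⟩ := exists_isometryEquiv hmap hsurj hiso
  refine ⟨E.toRealLinearIsometryEquiv, fun f hf => ?_⟩
  obtain ⟨F, hF⟩ := SInf.exists_eqOn_ball hf
  refine ⟨F, hF, fun z hz => ?_⟩
  rw [IsometryEquiv.toRealLinearIsometryEquiv_apply, SInf.sub_apply, hE F hz, hE 0 hz,
    eqOn_map_of_eqOn hmap hiso F.memSInf hf hF hz]
  exact (add_sub_cancel _ _).symm

end Transfer

theorem surjective_isometry_normSigma
    (T : (ℂ → ℂ) → (ℂ → ℂ))
    (hmap : ∀ f, MemSInf f → MemSInf (T f))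
    (hsurj : ∀ g, MemSInf g → ∃ f, MemSInf f ∧ Set.EqOn (T f) g (ball (0 : ℂ) 1))
    (hiso : ∀ f g, MemSInf f → MemSInf g → normSigma (T f - T g) = normSigma (f - g)) :
    ∃ c lam : ℂ, ‖c‖ = 1 ∧ ‖lam‖ = 1 ∧
      ((∀ f, MemSInf f → ∀ z ∈ ball (0 : ℂ) 1,
          T f z = T 0 z + c * f (lam * z)) ∨
       (∀ f, MemSInf f → ∀ z ∈ ball (0 : ℂ) 1,
          T f z = T 0 z + (starRingEnd ℂ) (c * f ((starRingEnd ℂ) (lam * z))))) := by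
  obtain ⟨U, hU⟩ := exists_linearIsometryEquiv hmap hsurj hiso
  obtain ⟨lam, a, rfl | rfl⟩ := SInf.exists_eq_rotate_or_eq_conjEquiv_trans_rotate U
  · refine ⟨a, lam, a.norm_coe, lam.norm_coe, .inl fun f hf z hz => ?_⟩
    obtain ⟨F, hF, hT⟩ := hU f hf
    rw [hT z hz, SInf.rotate_apply, hF (by simpa [Circle.norm_coe] using hz)]
  · refine ⟨conj (a : ℂ), lam, by simp [Circle.norm_coe], lam.norm_coe, .inr fun f hf z hz => ?_⟩
    obtain ⟨F, hF, hT⟩ := hU f hf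
    rw [hT z hz, LinearIsometryEquiv.trans_apply, SInf.rotate_apply, SInf.conjEquiv_apply,
      hF (by simpa [Circle.norm_coe] using hz)]
    exact congrArg (T 0 z + ·) (by rw [map_mul (starRingEnd ℂ) (conj (a : ℂ)), conj_conj])
end

section
/- Let a ∈ 𝔻, f₀ ∈ 𝒮^∞, let c₀, c₁, λ ∈ ℂ with |c₀| = |c₁| = |λ| = 1, let b ∈ 𝔻, and set ρ(z) = λ·(z − b)/(conj(b)·z − 1) for z ∈ 𝔻. Then the map T defined by T(f)(z) = f₀(z) + c₀·f(a) + ∫_{[a,z]} c₁·f'(ρ(ζ)) dζ maps 𝒮^∞ into 𝒮^∞ and is a surjective isometry of 𝒮^∞ with respect to the norm ‖·‖_σ. -/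
open Complex Metric Set

/-- The norm `‖f‖_σ = |f(a)| + sup_{w ∈ 𝔻} |f'(w)|`. -/
noncomputable def normSigmaA (a : ℂ) (f : ℂ → ℂ) : ℝ :=
  ‖f a‖ + ⨆ w : ball (0 : ℂ) 1, ‖deriv f (w : ℂ)‖

/-- The line integral `∫_{[a,z]} g(ζ) dζ = ∫₀¹ g(a + t(z − a))·(z − a) dt`
along the straight segment from `a` to `z`. -/
noncomputable def lineInt (g : ℂ → ℂ) (a z : ℂ) : ℂ :=
  ∫ t in (0:ℝ)..1, g (a + (t : ℂ) * (z - a)) * (z - a)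

/-! On an open convex set `U` containing `a`, a holomorphic function is determined by its value at
`a` and its derivative, and `lineInt` recovers it from these data. In the coordinates `(f a, f')`
the map `T` becomes the affine map `(v, h) ↦ (f₀ a + c₀ * v, f₀' + c₁ * (h ∘ ρ))`. Its linear part
preserves `|v| + sup |h|` because `|c₀| = |c₁| = 1` and `ρ` maps `U` onto itself, and its inverse
has the same shape, with `c₀⁻¹`, `c₁⁻¹` and `ρ⁻¹` in place of `c₀`, `c₁` and `ρ`. The disc enters
only through the fact that its Möbius automorphisms are such maps `ρ`. -/

section LineIntegral

variable {k F : ℂ → ℂ} {a z : ℂ}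

theorem lineInt_self (k : ℂ → ℂ) (a : ℂ) : lineInt k a a = 0 := by
  simp [lineInt]

theorem lineInt_eq_sub_of_hasDerivAt (hk : ContinuousOn k (segment ℝ a z))
    (hF : ∀ w ∈ segment ℝ a z, HasDerivAt F (k w) w) : lineInt k a z = F z - F a := by
  have hmem : MapsTo (fun t : ℝ => a + (t : ℂ) * (z - a)) (uIcc 0 1) (segment ℝ a z) := by
    rw [uIcc_of_le zero_le_one, segment_eq_image', mapsTo_iff_image_subset]
    simp
  have hpath (t : ℝ) : HasDerivAt (fun t : ℝ => a + (t : ℂ) * (z - a)) (z - a) t := by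
    simpa using ((ofRealCLM.hasDerivAt (x := t)).mul_const (z - a)).const_add a
  have hint : IntervalIntegrable (fun t : ℝ => k (a + (t : ℂ) * (z - a)) * (z - a))
      MeasureTheory.volume 0 1 :=
    ((hk.comp (by fun_prop) hmem).mul continuousOn_const).intervalIntegrable
  simpa [lineInt] using intervalIntegral.integral_eq_sub_of_hasDerivAt
    (fun t ht => (hF _ (hmem ht)).comp t (hpath t)) hint

theorem hasDerivAt_lineInt {U : Set ℂ} (hUo : IsOpen U) (hUc : Convex ℝ U)
    (hk : DifferentiableOn ℂ k U) (ha : a ∈ U) (hz : z ∈ U) :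
    HasDerivAt (lineInt k a) (k z) z := by
  obtain ⟨F, hF⟩ := hUc.exists_forall_hasDerivWithinAt hk
  have hF' (w : ℂ) (hw : w ∈ U) : HasDerivAt F (k w) w := (hF w hw).hasDerivAt (hUo.mem_nhds hw)
  refine ((hF' z hz).sub_const (F a)).congr_of_eventuallyEq ?_
  filter_upwards [hUo.mem_nhds hz] with w hw
  have hsub : segment ℝ a w ⊆ U := hUc.segment_subset ha hw
  exact lineInt_eq_sub_of_hasDerivAt (hk.continuousOn.mono hsub) fun u hu => hF' u (hsub hu)

end LineIntegral

section BoundedDerivative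

/-- The space `𝒮^∞` of an arbitrary set `U` in place of the disc: holomorphic functions on `U`
with bounded derivative. `MemSInf` is the case `U = ball 0 1`. -/
def MemSInfOn (U : Set ℂ) (f : ℂ → ℂ) : Prop :=
  DifferentiableOn ℂ f U ∧ ∃ M : ℝ, ∀ z ∈ U, ‖deriv f z‖ ≤ M

/-- The norm `|f(a)| + sup_{w ∈ U} |f'(w)|` on the space `𝒮^∞` of `U`, with value `‖f a‖` when
`f'` is unbounded on `U`. `normSigmaA` is the case `U = ball 0 1`. -/
noncomputable def normSigmaOn (U : Set ℂ) (a : ℂ) (f : ℂ → ℂ) : ℝ :=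
  ‖f a‖ + ⨆ w : U, ‖deriv f (w : ℂ)‖

variable {U : Set ℂ} {a : ℂ} {f g : ℂ → ℂ}

theorem MemSInfOn.add (hU : IsOpen U) (hf : MemSInfOn U f) (hg : MemSInfOn U g) :
    MemSInfOn U (f + g) := by
  obtain ⟨hfd, M, hM⟩ := hf
  obtain ⟨hgd, N, hN⟩ := hg
  refine ⟨hfd.add hgd, M + N, fun z hz => ?_⟩
  have hzU := hU.mem_nhds hz
  rw [deriv_add (hfd.differentiableAt hzU) (hgd.differentiableAt hzU)]
  exact norm_add_le_of_le (hM z hz) (hN z hz)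

theorem MemSInfOn.sub (hU : IsOpen U) (hf : MemSInfOn U f) (hg : MemSInfOn U g) :
    MemSInfOn U (f - g) := by
  obtain ⟨hfd, M, hM⟩ := hf
  obtain ⟨hgd, N, hN⟩ := hg
  refine ⟨hfd.sub hgd, M + N, fun z hz => ?_⟩
  have hzU := hU.mem_nhds hz
  rw [deriv_sub (hfd.differentiableAt hzU) (hgd.differentiableAt hzU)]
  exact norm_sub_le_of_le (hM z hz) (hN z hz)

theorem normSigmaOn_congr (hU : IsOpen U) (ha : a ∈ U) (hfg : EqOn f g U) :
    normSigmaOn U a f = normSigmaOn U a g := by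
  have hderiv (w : U) : deriv f w = deriv g w := hfg.deriv hU w.2
  simp only [normSigmaOn, hfg ha, hderiv]

end BoundedDerivative

section DerivCompOp

/-- The linear part of `T`: the operator sending `f` to the function with value `c₀ * f a` at `a`
and derivative `c₁ * (f' ∘ ρ)`. -/
noncomputable def derivCompOp (a c₀ c₁ : ℂ) (ρ f : ℂ → ℂ) (z : ℂ) : ℂ :=
  c₀ * f a + lineInt (fun ζ => c₁ * deriv f (ρ ζ)) a z

/-- `ρ` is a holomorphic automorphism of `U` with inverse `σ`. The inverse is carried along as
data because only its values on `U` are determined by `ρ`. -/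
structure IsHolomorphicAutOn (ρ σ : ℂ → ℂ) (U : Set ℂ) : Prop where
  differentiableOn : DifferentiableOn ℂ ρ U
  differentiableOn_inv : DifferentiableOn ℂ σ U
  mapsTo : MapsTo ρ U U
  mapsTo_inv : MapsTo σ U U
  invOn : InvOn σ ρ U U

variable {U : Set ℂ} {a c₀ c₁ : ℂ} {ρ σ f g : ℂ → ℂ}

theorem derivCompOp_self (a c₀ c₁ : ℂ) (ρ f : ℂ → ℂ) : derivCompOp a c₀ c₁ ρ f a = c₀ * f a := by
  rw [derivCompOp, lineInt_self, add_zero]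

theorem hasDerivAt_derivCompOp (hUo : IsOpen U) (hUc : Convex ℝ U) (ha : a ∈ U)
    (hρ : DifferentiableOn ℂ ρ U) (hρU : MapsTo ρ U U) (hf : DifferentiableOn ℂ f U)
    {z : ℂ} (hz : z ∈ U) :
    HasDerivAt (derivCompOp a c₀ c₁ ρ f) (c₁ * deriv f (ρ z)) z :=
  (hasDerivAt_lineInt hUo hUc (((hf.deriv hUo).comp hρ hρU).const_mul c₁) ha hz).const_add _

theorem differentiableOn_derivCompOp (hUo : IsOpen U) (hUc : Convex ℝ U) (ha : a ∈ U)
    (hρ : DifferentiableOn ℂ ρ U) (hρU : MapsTo ρ U U) (hf : DifferentiableOn ℂ f U) :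
    DifferentiableOn ℂ (derivCompOp a c₀ c₁ ρ f) U := fun _ hz =>
  (hasDerivAt_derivCompOp hUo hUc ha hρ hρU hf hz).differentiableAt.differentiableWithinAt

theorem MemSInfOn.derivCompOp (hUo : IsOpen U) (hUc : Convex ℝ U) (ha : a ∈ U)
    (hρ : DifferentiableOn ℂ ρ U) (hρU : MapsTo ρ U U) (hf : MemSInfOn U f) :
    MemSInfOn U (derivCompOp a c₀ c₁ ρ f) := by
  obtain ⟨hfd, M, hM⟩ := hf
  refine ⟨differentiableOn_derivCompOp hUo hUc ha hρ hρU hfd, ‖c₁‖ * M, fun z hz => ?_⟩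
  rw [(hasDerivAt_derivCompOp hUo hUc ha hρ hρU hfd hz).deriv, norm_mul]
  exact mul_le_mul_of_nonneg_left (hM _ (hρU hz)) (norm_nonneg c₁)

theorem eqOn_derivCompOp_sub (hUo : IsOpen U) (hUc : Convex ℝ U) (ha : a ∈ U)
    (hρ : DifferentiableOn ℂ ρ U) (hρU : MapsTo ρ U U)
    (hf : DifferentiableOn ℂ f U) (hg : DifferentiableOn ℂ g U) :
    EqOn (derivCompOp a c₀ c₁ ρ (f - g))
      (derivCompOp a c₀ c₁ ρ f - derivCompOp a c₀ c₁ ρ g) U := by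
  have hdiff {h : ℂ → ℂ} (hh : DifferentiableOn ℂ h U) :=
    differentiableOn_derivCompOp (c₀ := c₀) (c₁ := c₁) hUo hUc ha hρ hρU hh
  have hderiv {h : ℂ → ℂ} (hh : DifferentiableOn ℂ h U) {z : ℂ} (hz : z ∈ U) :=
    hasDerivAt_derivCompOp (c₀ := c₀) (c₁ := c₁) hUo hUc ha hρ hρU hh hz
  refine hUo.eqOn_of_deriv_eq hUc.isPreconnected (hdiff (hf.sub hg)) ((hdiff hf).sub (hdiff hg))
    (fun z hz => ?_) ha (by simp only [derivCompOp_self, Pi.sub_apply, mul_sub])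
  have hρz := hUo.mem_nhds (hρU hz)
  rw [(hderiv (hf.sub hg) hz).deriv, ((hderiv hf hz).sub (hderiv hg hz)).deriv,
    deriv_sub (hf.differentiableAt hρz) (hg.differentiableAt hρz), mul_sub]

theorem eqOn_derivCompOp_derivCompOp_inv (hUo : IsOpen U) (hUc : Convex ℝ U) (ha : a ∈ U)
    (hc₀ : c₀ ≠ 0) (hc₁ : c₁ ≠ 0) (hρ : IsHolomorphicAutOn ρ σ U) (hf : DifferentiableOn ℂ f U) :
    EqOn (derivCompOp a c₀ c₁ ρ (derivCompOp a c₀⁻¹ c₁⁻¹ σ f)) f U := by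
  have hσf : DifferentiableOn ℂ (derivCompOp a c₀⁻¹ c₁⁻¹ σ f) U :=
    differentiableOn_derivCompOp hUo hUc ha hρ.differentiableOn_inv hρ.mapsTo_inv hf
  refine hUo.eqOn_of_deriv_eq hUc.isPreconnected
    (differentiableOn_derivCompOp hUo hUc ha hρ.differentiableOn hρ.mapsTo hσf) hf
    (fun z hz => ?_) ha (by rw [derivCompOp_self, derivCompOp_self, mul_inv_cancel_left₀ hc₀])
  rw [(hasDerivAt_derivCompOp hUo hUc ha hρ.differentiableOn hρ.mapsTo hσf hz).deriv,
    (hasDerivAt_derivCompOp hUo hUc ha hρ.differentiableOn_inv hρ.mapsTo_inv hf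
      (hρ.mapsTo hz)).deriv,
    hρ.invOn.1 hz, mul_inv_cancel_left₀ hc₁]

theorem normSigmaOn_derivCompOp (hUo : IsOpen U) (hUc : Convex ℝ U) (ha : a ∈ U)
    (hc₀ : ‖c₀‖ = 1) (hc₁ : ‖c₁‖ = 1) (hρ : DifferentiableOn ℂ ρ U) (hρU : MapsTo ρ U U)
    (hρs : SurjOn ρ U U) (hf : DifferentiableOn ℂ f U) :
    normSigmaOn U a (derivCompOp a c₀ c₁ ρ f) = normSigmaOn U a f := by
  have hderiv (w : U) : ‖deriv f (ρ w)‖ = ‖deriv (derivCompOp a c₀ c₁ ρ f) w‖ := by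
    rw [(hasDerivAt_derivCompOp hUo hUc ha hρ hρU hf w.2).deriv, norm_mul, hc₁, one_mul]
  have hsup : ⨆ w : U, ‖deriv (derivCompOp a c₀ c₁ ρ f) w‖ = ⨆ w : U, ‖deriv f w‖ :=
    ((hρU.restrict_surjective_iff).2 hρs).iSup_congr _ hderiv
  rw [normSigmaOn, normSigmaOn, hsup, derivCompOp_self, norm_mul, hc₀, one_mul]

end DerivCompOp

theorem integral_form_is_surjective_isometry_normSigmaA_general
    {U : Set ℂ} (hUo : IsOpen U) (hUc : Convex ℝ U) {a : ℂ} (ha : a ∈ U)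
    {f₀ : ℂ → ℂ} (hf₀ : MemSInfOn U f₀)
    {c₀ c₁ : ℂ} (hc₀ : ‖c₀‖ = 1) (hc₁ : ‖c₁‖ = 1)
    {ρ σ : ℂ → ℂ} (hρ : IsHolomorphicAutOn ρ σ U) {T : (ℂ → ℂ) → (ℂ → ℂ)}
    (hT : ∀ f z, T f z = f₀ z + c₀ * f a + lineInt (fun ζ => c₁ * deriv f (ρ ζ)) a z) :
    (∀ f, MemSInfOn U f → MemSInfOn U (T f)) ∧
    (∀ g, MemSInfOn U g → ∃ f, MemSInfOn U f ∧ EqOn (T f) g U) ∧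
    (∀ f g, MemSInfOn U f → MemSInfOn U g →
      normSigmaOn U a (T f - T g) = normSigmaOn U a (f - g)) := by
  have hT' (f : ℂ → ℂ) : T f = f₀ + derivCompOp a c₀ c₁ ρ f :=
    funext fun z => (hT f z).trans (add_assoc _ _ _)
  simp only [hT']
  refine ⟨fun f hf => hf₀.add hUo (hf.derivCompOp hUo hUc ha hρ.differentiableOn hρ.mapsTo),
    fun g hg => ?_, fun f g hf hg => ?_⟩
  · have hgf₀ : MemSInfOn U (g - f₀) := hg.sub hUo hf₀
    refine ⟨derivCompOp a c₀⁻¹ c₁⁻¹ σ (g - f₀),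
      hgf₀.derivCompOp hUo hUc ha hρ.differentiableOn_inv hρ.mapsTo_inv, fun z hz => ?_⟩
    have hc₀' : c₀ ≠ 0 := norm_ne_zero_iff.1 (by simp [hc₀])
    have hc₁' : c₁ ≠ 0 := norm_ne_zero_iff.1 (by simp [hc₁])
    rw [Pi.add_apply, eqOn_derivCompOp_derivCompOp_inv hUo hUc ha hc₀' hc₁' hρ hgf₀.1 hz,
      Pi.sub_apply, add_sub_cancel]
  · rw [add_sub_add_left_eq_sub, ← normSigmaOn_congr hUo ha
        (eqOn_derivCompOp_sub hUo hUc ha hρ.differentiableOn hρ.mapsTo hf.1 hg.1),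
      normSigmaOn_derivCompOp hUo hUc ha hc₀ hc₁ hρ.differentiableOn hρ.mapsTo
        (hρ.invOn.2.surjOn hρ.mapsTo_inv) (hf.1.sub hg.1)]

section DiscAut

/-- The Möbius automorphism `z ↦ lam (z − b) / (conj(b) z − 1)` of the unit disc, for `|lam| = 1`
and `|b| < 1`. -/
noncomputable def discAut (lam b z : ℂ) : ℂ :=
  lam * (z - b) / ((starRingEnd ℂ) b * z - 1)

variable {lam b z : ℂ}

theorem normSq_conj_mul_sub_one_sub_normSq_sub (b z : ℂ) :
    normSq ((starRingEnd ℂ) b * z - 1) - normSq (z - b) = (1 - normSq b) * (1 - normSq z) := by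
  simp only [normSq_apply, sub_re, sub_im, mul_re, mul_im, conj_re, conj_im, one_re, one_im]
  ring

theorem norm_sub_lt_norm_conj_mul_sub_one (hb : b ∈ ball (0 : ℂ) 1) (hz : z ∈ ball (0 : ℂ) 1) :
    ‖z - b‖ < ‖(starRingEnd ℂ) b * z - 1‖ := by
  have hpos {w : ℂ} (hw : w ∈ ball (0 : ℂ) 1) : 0 < 1 - normSq w := by
    rw [mem_ball_zero_iff] at hw
    rw [sub_pos, normSq_eq_norm_sq]
    exact pow_lt_one₀ (norm_nonneg w) hw two_ne_zero
  refine lt_of_pow_lt_pow_left₀ 2 (norm_nonneg _) ?_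
  rw [← normSq_eq_norm_sq, ← normSq_eq_norm_sq, ← sub_pos, normSq_conj_mul_sub_one_sub_normSq_sub]
  exact mul_pos (hpos hb) (hpos hz)

theorem conj_mul_sub_one_ne_zero (hb : b ∈ ball (0 : ℂ) 1) (hz : z ∈ ball (0 : ℂ) 1) :
    (starRingEnd ℂ) b * z - 1 ≠ 0 :=
  norm_pos_iff.1 ((norm_nonneg _).trans_lt (norm_sub_lt_norm_conj_mul_sub_one hb hz))

theorem mapsTo_discAut (hlam : ‖lam‖ = 1) (hb : b ∈ ball (0 : ℂ) 1) :
    MapsTo (discAut lam b) (ball 0 1) (ball 0 1) := fun z hz => by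
  rw [mem_ball_zero_iff, discAut, norm_div, norm_mul, hlam, one_mul,
    div_lt_one (norm_pos_iff.2 (conj_mul_sub_one_ne_zero hb hz))]
  exact norm_sub_lt_norm_conj_mul_sub_one hb hz

theorem differentiableOn_discAut (lam : ℂ) (hb : b ∈ ball (0 : ℂ) 1) :
    DifferentiableOn ℂ (discAut lam b) (ball 0 1) :=
  DifferentiableOn.div (by fun_prop) (by fun_prop) fun _ hz => conj_mul_sub_one_ne_zero hb hz

theorem leftInvOn_discAut (hlam : ‖lam‖ = 1) (hb : b ∈ ball (0 : ℂ) 1) :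
    LeftInvOn (discAut lam⁻¹ (lam * b)) (discAut lam b) (ball 0 1) := fun z hz => by
  have hlam' : lam ≠ 0 := norm_ne_zero_iff.1 (by simp [hlam])
  have hconj : (starRingEnd ℂ) lam * lam = 1 := by simp [conj_mul', hlam]
  have hlamb : lam * b ∈ ball (0 : ℂ) 1 := by simpa [hlam] using hb
  have hden := conj_mul_sub_one_ne_zero hlamb (mapsTo_discAut hlam hb hz)
  have hmul : discAut lam b z * ((starRingEnd ℂ) b * z - 1) = lam * (z - b) :=
    div_mul_cancel₀ _ (conj_mul_sub_one_ne_zero hb hz)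
  rw [discAut, div_eq_iff hden, inv_mul_eq_iff_eq_mul₀ hlam', map_mul]
  linear_combination -hmul - discAut lam b z * (starRingEnd ℂ) b * z * hconj

theorem isHolomorphicAutOn_discAut (hlam : ‖lam‖ = 1) (hb : b ∈ ball (0 : ℂ) 1) :
    IsHolomorphicAutOn (discAut lam b) (discAut lam⁻¹ (lam * b)) (ball 0 1) := by
  have hlam' : lam ≠ 0 := norm_ne_zero_iff.1 (by simp [hlam])
  have hlaminv : ‖lam⁻¹‖ = 1 := by rw [norm_inv, hlam, inv_one]
  have hlamb : lam * b ∈ ball (0 : ℂ) 1 := by simpa [hlam] using hb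
  have hright := leftInvOn_discAut hlaminv hlamb
  rw [inv_inv, inv_mul_cancel_left₀ hlam'] at hright
  exact ⟨differentiableOn_discAut lam hb, differentiableOn_discAut lam⁻¹ hlamb,
    mapsTo_discAut hlam hb, mapsTo_discAut hlaminv hlamb, leftInvOn_discAut hlam hb, hright⟩

end DiscAut

theorem integral_form_is_surjective_isometry_normSigmaA
    (a : ℂ) (ha : a ∈ ball (0 : ℂ) 1)
    (f₀ : ℂ → ℂ) (hf₀ : MemSInf f₀)
    (c₀ c₁ lam : ℂ) (hc₀ : ‖c₀‖ = 1) (hc₁ : ‖c₁‖ = 1) (hlam : ‖lam‖ = 1)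
    (b : ℂ) (hb : b ∈ ball (0 : ℂ) 1)
    (ρ : ℂ → ℂ) (hρ : ∀ z, ρ z = lam * (z - b) / ((starRingEnd ℂ) b * z - 1))
    (T : (ℂ → ℂ) → (ℂ → ℂ))
    (hT : ∀ f z, T f z = f₀ z + c₀ * f a + lineInt (fun ζ => c₁ * deriv f (ρ ζ)) a z) :
    (∀ f, MemSInf f → MemSInf (T f)) ∧
    (∀ g, MemSInf g → ∃ f, MemSInf f ∧ Set.EqOn (T f) g (ball (0 : ℂ) 1)) ∧
    (∀ f g, MemSInf f → MemSInf g →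
      normSigmaA a (T f - T g) = normSigmaA a (f - g)) := by
  obtain rfl : ρ = discAut lam b := funext hρ
  exact integral_form_is_surjective_isometry_normSigmaA_general isOpen_ball (convex_ball 0 1)
    ha hf₀ hc₀ hc₁ (isHolomorphicAutOn_discAut hlam hb) hT
end
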